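/- arXiv:2208.10203 — 2 statements merged into one kernel-verified Lean document; each statement's English description precedes it below -/
import Mathlib

section
/- Let 𝒳=(x_j) be a semi-normalized Schauder basis of a quasi-Banach space 𝕏, let 𝕊 be a locally convex subsymmetric sequence space, and let σ=(σ_n) be an ordered partition of ℕ with N_n=|σ_n| and M_r=Σ_{n=1}^r N_n. Assume that the fundamental function Λ[𝕊] has both the lower regularity property and the upper regularity property, and that M_r ≲ N_{r+1} for all r. Then the unit vector system of 𝕐[𝒳,𝕊,σ] is asymptotically suppression unconditional. -/
noncomputable section

open Classical
open scoped ENNReal NNReal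

namespace AGpaper

/-! ### Convergence and completeness with respect to a gauge -/

/-- Convergence of a sequence with respect to a gauge (quasi-norm) `q`. -/
def QTendsto {X : Type*} [AddCommGroup X] (q : X → ℝ) (u : ℕ → X) (x : X) : Prop :=
  ∀ ε : ℝ, 0 < ε → ∃ n₀ : ℕ, ∀ n, n₀ ≤ n → q (u n - x) < ε

/-- Cauchy condition with respect to a gauge `q`. -/
def QCauchy {X : Type*} [AddCommGroup X] (q : X → ℝ) (u : ℕ → X) : Prop :=
  ∀ ε : ℝ, 0 < ε → ∃ n₀ : ℕ, ∀ m, n₀ ≤ m → ∀ n, n₀ ≤ n → q (u m - u n) < ε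

/-- A quasi-Banach space structure on a real vector space `X`. -/
structure QuasiBanach (X : Type*) [AddCommGroup X] [Module ℝ X] where
  q : X → ℝ
  kappa : ℝ
  one_le_kappa : 1 ≤ kappa
  q_nonneg : ∀ x, 0 ≤ q x
  q_eq_zero_iff : ∀ x, q x = 0 ↔ x = 0
  q_smul : ∀ (a : ℝ) (x : X), q (a • x) = |a| * q x
  q_triangle : ∀ x y, q (x + y) ≤ kappa * (q x + q y)
  complete : ∀ u : ℕ → X, QCauchy q u → ∃ x, QTendsto q u x

/-- `X` is `p`-convex (0<p≤1): after renorming the quasi-norm is a `p`-norm. -/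
def QuasiBanach.PConvex {X : Type*} [AddCommGroup X] [Module ℝ X]
    (B : QuasiBanach X) (p : ℝ) : Prop :=
  ∃ q' : X → ℝ, (∀ x, 0 ≤ q' x) ∧ (∀ (a : ℝ) (x : X), q' (a • x) = |a| * q' x) ∧
    (∀ x y, q' (x + y) ^ p ≤ q' x ^ p + q' y ^ p) ∧
    ∃ c C : ℝ, 0 < c ∧ ∀ x, c * B.q x ≤ q' x ∧ q' x ≤ C * B.q x

/-! ### Biorthogonal systems and Schauder bases -/

variable {X : Type*} [AddCommGroup X] [Module ℝ X]

/-- A biorthogonal system in a space of vectors `X` which is equipped with a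
membership predicate `mem` (the carrier of the space) and a gauge `nrm`:
the coordinate functionals are linear and bounded on the carrier. -/
structure BioSystem (mem : X → Prop) (nrm : X → ℝ) where
  vec : ℕ → X
  vec_mem : ∀ n, mem (vec n)
  coord : ℕ → X → ℝ
  coord_add : ∀ (n : ℕ) (f g : X), mem f → mem g → coord n (f + g) = coord n f + coord n g
  coord_smul : ∀ (n : ℕ) (a : ℝ) (f : X), mem f → coord n (a • f) = a * coord n f
  coord_bdd : ∀ n : ℕ, ∃ C : ℝ, ∀ f, mem f → |coord n f| ≤ C * nrm f
  biorth : ∀ m n, coord m (vec n) = if m = n then (1 : ℝ) else 0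

/-- A Schauder basis: a biorthogonal system whose expansions converge. -/
structure SchauderB (mem : X → Prop) (nrm : X → ℝ) extends BioSystem mem nrm where
  expansion : ∀ f, mem f →
    QTendsto nrm (fun m => ∑ n ∈ Finset.range m, coord n f • vec n) f

/-- A Schauder basis of a quasi-Banach space. -/
abbrev QBasis {X : Type*} [AddCommGroup X] [Module ℝ X] (B : QuasiBanach X) :=
  SchauderB (fun _ : X => True) B.q

variable {mem : X → Prop} {nrm : X → ℝ}

/-- Coordinate projection on a finite set `A`. -/
def BioSystem.proj (b : BioSystem mem nrm) (A : Finset ℕ) (f : X) : X :=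
  ∑ n ∈ A, b.coord n f • b.vec n

def BioSystem.SemiNormalized (b : BioSystem mem nrm) : Prop :=
  ∃ c C : ℝ, 0 < c ∧ ∀ n, c ≤ nrm (b.vec n) ∧ nrm (b.vec n) ≤ C

/-- `A` is a greedy set of `f`. -/
def BioSystem.GreedySet (b : BioSystem mem nrm) (f : X) (A : Finset ℕ) : Prop :=
  ∀ j ∈ A, ∀ k, k ∉ A → |b.coord k f| ≤ |b.coord j f|

def BioSystem.QuasiGreedy (b : BioSystem mem nrm) : Prop :=
  ∃ C : ℝ, ∀ f, mem f → ∀ A : Finset ℕ, b.GreedySet f A → nrm (b.proj A f) ≤ C * nrm f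

def BioSystem.Democratic (b : BioSystem mem nrm) : Prop :=
  ∃ C : ℝ, ∀ A B : Finset ℕ, A.card ≤ B.card →
    nrm (∑ n ∈ A, b.vec n) ≤ C * nrm (∑ n ∈ B, b.vec n)

def BioSystem.AlmostGreedy (b : BioSystem mem nrm) : Prop :=
  b.QuasiGreedy ∧ b.Democratic

/-- Asymptotic suppression unconditionality: coordinate projections `S_A` with
`|A| < min A` are uniformly bounded. -/
def BioSystem.ASU (b : BioSystem mem nrm) : Prop :=
  ∃ D : ℝ, ∀ A : Finset ℕ, (∀ n ∈ A, A.card < n) →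
    ∀ f, mem f → nrm (b.proj A f) ≤ D * nrm f

/-- The fundamental function (upper super-democracy function). -/
def BioSystem.fundFun (b : BioSystem mem nrm) (m : ℕ) : ℝ :=
  sSup {t : ℝ | ∃ (A : Finset ℕ) (ε : ℕ → ℝ), A.card ≤ m ∧ (∀ n ∈ A, |ε n| = 1) ∧
    t = nrm (∑ n ∈ A, ε n • b.vec n)}

/-- The unconditionality parameters `k_m`. -/
def BioSystem.kparam (b : BioSystem mem nrm) (m : ℕ) : ℝ :=
  sSup {t : ℝ | ∃ (A : Finset ℕ) (f : X), A.card ≤ m ∧ mem f ∧ nrm f ≤ 1 ∧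
    t = nrm (b.proj A f)}

/-- The unconditionality parameters `k̃_m` (restricted to the span of the first
`m` basis vectors). -/
def BioSystem.ktilde (b : BioSystem mem nrm) (m : ℕ) : ℝ :=
  sSup {t : ℝ | ∃ (A : Finset ℕ) (a : ℕ → ℝ),
    nrm (∑ n ∈ Finset.range m, a n • b.vec n) ≤ 1 ∧
    t = nrm (b.proj A (∑ n ∈ Finset.range m, a n • b.vec n))}

/-! ### Symmetric and subsymmetric sequence spaces -/

/-- The indicator of `{0, 1, ..., m-1}`. -/
def indic (m : ℕ) : ℕ → ℝ := fun j => if j < m then 1 else 0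

/-- The `n`-th unit vector. -/
def unitVec (n : ℕ) : ℕ → ℝ := fun j => if j = n then 1 else 0

/-- The spreading `Σ_n ε_n f_n e_{φ(n)}` of a sequence `f`. -/
def spread (φ : ℕ → ℕ) (ε : ℕ → ℝ) (f : ℕ → ℝ) : ℕ → ℝ :=
  fun j => if h : ∃ n, φ n = j then ε h.choose * f h.choose else 0

/-- A symmetric sequence space: a quasi-Banach sequence space whose quasi-norm is
invariant under permutations and signs. -/
structure SymmetricSpace where
  mem : (ℕ → ℝ) → Prop
  nrm : (ℕ → ℝ) → ℝ
  kappa : ℝ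
  one_le_kappa : 1 ≤ kappa
  zero_mem : mem 0
  add_mem : ∀ {f g}, mem f → mem g → mem (f + g)
  smul_mem : ∀ (a : ℝ) {f}, mem f → mem (a • f)
  nrm_nonneg : ∀ f, 0 ≤ nrm f
  nrm_eq_zero : ∀ {f}, mem f → (nrm f = 0 ↔ f = 0)
  nrm_smul : ∀ (a : ℝ) (f : ℕ → ℝ), nrm (a • f) = |a| * nrm f
  nrm_triangle : ∀ {f g}, mem f → mem g → nrm (f + g) ≤ kappa * (nrm f + nrm g)
  complete : ∀ u : ℕ → (ℕ → ℝ), (∀ n, mem (u n)) → QCauchy nrm u →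
    ∃ f, mem f ∧ QTendsto nrm u f
  symmetric : ∀ {f}, mem f → ∀ (ε : ℕ → ℝ), (∀ n, |ε n| = 1) → ∀ π : Equiv.Perm ℕ,
    mem (fun j => ε j * f (π j)) ∧ nrm (fun j => ε j * f (π j)) = nrm f

/-- Fundamental function of a symmetric sequence space. -/
def SymmetricSpace.Lam (S : SymmetricSpace) (m : ℕ) : ℝ := S.nrm (indic m)

/-- A (locally convex, i.e. Banach) subsymmetric sequence space. -/
structure SubsymmetricSpace where
  mem : (ℕ → ℝ) → Prop
  nrm : (ℕ → ℝ) → ℝ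
  zero_mem : mem 0
  add_mem : ∀ {f g}, mem f → mem g → mem (f + g)
  smul_mem : ∀ (a : ℝ) {f}, mem f → mem (a • f)
  nrm_nonneg : ∀ f, 0 ≤ nrm f
  nrm_eq_zero : ∀ {f}, mem f → (nrm f = 0 ↔ f = 0)
  nrm_smul : ∀ (a : ℝ) (f : ℕ → ℝ), nrm (a • f) = |a| * nrm f
  nrm_triangle : ∀ {f g}, mem f → mem g → nrm (f + g) ≤ nrm f + nrm g
  complete : ∀ u : ℕ → (ℕ → ℝ), (∀ n, mem (u n)) → QCauchy nrm u →
    ∃ f, mem f ∧ QTendsto nrm u f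
  unit_mem : ∀ n, mem (unitVec n)
  unit_basis : ∀ f, mem f →
    QTendsto nrm (fun m => fun j => if j < m then f j else 0) f
  subsym : ∀ {f}, mem f → ∀ (ε : ℕ → ℝ), (∀ n, |ε n| = 1) → ∀ φ : ℕ → ℕ, StrictMono φ →
    mem (spread φ ε f) ∧ nrm (spread φ ε f) = nrm f

/-- Fundamental function of (the unit vector system of) a subsymmetric sequence space. -/
def SubsymmetricSpace.Lam (S : SubsymmetricSpace) (m : ℕ) : ℝ := S.nrm (indic m)

/-- The dual fundamental function `Λ*_m = m / Λ_m`. -/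
def SubsymmetricSpace.LamStar (S : SubsymmetricSpace) (m : ℕ) : ℝ := (m : ℝ) / S.Lam m

/-- Lower regularity property of a sequence of positive reals (indexed by `m ≥ 1`). -/
def LRP (Γ : ℕ → ℝ) : Prop := ∃ b : ℕ, 0 < b ∧ ∀ m : ℕ, 1 ≤ m → 2 * Γ m ≤ Γ (b * m)

/-- Upper regularity property. -/
def URP (Γ : ℕ → ℝ) : Prop := ∃ b : ℕ, 0 < b ∧ ∀ m : ℕ, 1 ≤ m → 2 * Γ (b * m) ≤ (b : ℝ) * Γ m

/-- Superreflexivity of a subsymmetric sequence space: it admits an equivalent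
uniformly convex norm. -/
def SubsymmetricSpace.Superreflexive (S : SubsymmetricSpace) : Prop :=
  ∃ nrm' : (ℕ → ℝ) → ℝ,
    (∀ f, S.mem f → 0 ≤ nrm' f) ∧
    (∀ (a : ℝ) (f), S.mem f → nrm' (a • f) = |a| * nrm' f) ∧
    (∀ f g, S.mem f → S.mem g → nrm' (f + g) ≤ nrm' f + nrm' g) ∧
    (∃ c C : ℝ, 0 < c ∧ ∀ f, S.mem f → c * S.nrm f ≤ nrm' f ∧ nrm' f ≤ C * S.nrm f) ∧
    (∀ ε : ℝ, 0 < ε → ∃ δ : ℝ, 0 < δ ∧ ∀ f g, S.mem f → S.mem g →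
      nrm' f ≤ 1 → nrm' g ≤ 1 → ε ≤ nrm' (f - g) → nrm' (f + g) ≤ 2 * (1 - δ))

/-! ### Upper and lower estimates -/

/-- A finite family with pairwise disjoint supports. -/
def DisjFam {ι : Type*} (F : ι → (ℕ → ℝ)) (J : Finset ι) : Prop :=
  ∀ i ∈ J, ∀ j ∈ J, i ≠ j → ∀ k, F i k = 0 ∨ F j k = 0

/-- `(Σ_{i∈J} |g i|^q)^{1/q}`, interpreted as `max_{i∈J} |g i|` when `q = ∞`. -/
def estNorm (q : ℝ≥0∞) {ι : Type*} (J : Finset ι) (g : ι → ℝ) : ℝ :=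
  if q = ⊤ then ((J.sup fun i => Real.toNNReal |g i| : NNReal) : ℝ)
  else (∑ i ∈ J, |g i| ^ q.toReal) ^ (1 / q.toReal)

/-- Upper `s`-estimate for a subsymmetric space (`s` finite). -/
def SubsymmetricSpace.UpperEst (S : SubsymmetricSpace) (s : ℝ) : Prop :=
  ∃ C : ℝ, ∀ (J : Finset ℕ) (F : ℕ → (ℕ → ℝ)), (∀ i ∈ J, S.mem (F i)) → DisjFam F J →
    S.nrm (∑ i ∈ J, F i) ≤ C * (∑ i ∈ J, S.nrm (F i) ^ s) ^ (1 / s)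

/-- Lower `q`-estimate for a subsymmetric space (`q` finite). -/
def SubsymmetricSpace.LowerEst (S : SubsymmetricSpace) (q : ℝ) : Prop :=
  ∃ C : ℝ, ∀ (J : Finset ℕ) (F : ℕ → (ℕ → ℝ)), (∀ i ∈ J, S.mem (F i)) → DisjFam F J →
    (∑ i ∈ J, S.nrm (F i) ^ q) ^ (1 / q) ≤ C * S.nrm (∑ i ∈ J, F i)

/-- Lower `q`-estimate, `q ∈ (0, ∞]`. -/
def SubsymmetricSpace.LowerEstE (S : SubsymmetricSpace) (q : ℝ≥0∞) : Prop :=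
  ∃ C : ℝ, ∀ (J : Finset ℕ) (F : ℕ → (ℕ → ℝ)), (∀ i ∈ J, S.mem (F i)) → DisjFam F J →
    estNorm q J (fun i => S.nrm (F i)) ≤ C * S.nrm (∑ i ∈ J, F i)

/-! ### Squeeze-symmetry -/

/-- The system is squeezed between the symmetric spaces `S₁` and `S₂`: the series
transform is bounded from `S₁` (on finitely supported vectors) and the coefficient
transform is bounded into `S₂`. -/
def BioSystem.SqueezedBetween (b : BioSystem mem nrm) (S₁ S₂ : SymmetricSpace) : Prop :=
  (∃ C : ℝ, ∀ a : ℕ →₀ ℝ, S₁.mem ⇑a →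
    nrm (∑ n ∈ a.support, a n • b.vec n) ≤ C * S₁.nrm ⇑a) ∧
  (∃ C : ℝ, ∀ f, mem f → S₂.mem (fun n => b.coord n f) ∧
    S₂.nrm (fun n => b.coord n f) ≤ C * nrm f)

/-- Squeeze-symmetric system: squeezed between two symmetric spaces with
equivalent fundamental functions. -/
def BioSystem.SqueezeSymmetric (b : BioSystem mem nrm) : Prop :=
  ∃ S₁ S₂ : SymmetricSpace, b.SqueezedBetween S₁ S₂ ∧
    ∃ c C : ℝ, 0 < c ∧ ∀ m : ℕ, 1 ≤ m →
      c * S₂.Lam m ≤ S₁.Lam m ∧ S₁.Lam m ≤ C * S₂.Lam m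

/-! ### Ordered partitions and the Dilworth–Kalton–Kutzarova construction -/

/-- An ordered partition of `ℕ` into (finite, nonempty) integer intervals. -/
structure OrderedPartition where
  part : ℕ → Finset ℕ
  nonempty : ∀ n, (part n).Nonempty
  ordered : ∀ n, ∀ i ∈ part n, ∀ j ∈ part (n + 1), i < j
  covers : ∀ k : ℕ, ∃ n, k ∈ part n

def OrderedPartition.N (σ : OrderedPartition) (n : ℕ) : ℕ := (σ.part n).card

def OrderedPartition.M (σ : OrderedPartition) (r : ℕ) : ℕ := ∑ n ∈ Finset.range r, σ.N n

/-- The averaging projection `P_σ`. -/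
def OrderedPartition.Pavg (σ : OrderedPartition) (f : ℕ → ℝ) : ℕ → ℝ := fun j =>
  if h : ∃ n, j ∈ σ.part n then
    (∑ i ∈ σ.part h.choose, f i) / ((σ.part h.choose).card : ℝ)
  else 0

/-- The complementary projection `Q_σ = Id - P_σ`. -/
def OrderedPartition.Qavg (σ : OrderedPartition) (f : ℕ → ℝ) : ℕ → ℝ := f - σ.Pavg f

/-- The functionals `v_n* = (Λ*_{N_n})⁻¹ Σ_{j∈σ_n} e_j*`. -/
def vstar (S : SubsymmetricSpace) (σ : OrderedPartition) (n : ℕ) (f : ℕ → ℝ) : ℝ :=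
  (S.Lam (σ.N n) / (σ.N n : ℝ)) * ∑ j ∈ σ.part n, f j

/-- The map `H(f) = Σ_n v_n*(f) x_n`. -/
def Hmap {X : Type*} [AddCommGroup X] [Module ℝ X] (B : QuasiBanach X) (b : QBasis B)
    (S : SubsymmetricSpace) (σ : OrderedPartition) (f : ℕ → ℝ) : X :=
  ∑ᶠ n, vstar S σ n f • b.vec n

/-- The quasi-norm `‖f‖ = ‖Q_σ f‖_S + ‖H f‖_X` on finitely supported sequences,
whose completion is the space `𝕐[𝒳,𝕊,σ]`. -/
def YNorm {X : Type*} [AddCommGroup X] [Module ℝ X] (B : QuasiBanach X) (b : QBasis B)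
    (S : SubsymmetricSpace) (σ : OrderedPartition) (f : ℕ → ℝ) : ℝ :=
  S.nrm (σ.Qavg f) + B.q (Hmap B b S σ f)

/-! ### Concrete sequence spaces -/

/-- Membership in `ℓ_p`, `0 < p < ∞`. -/
def lpMem (p : ℝ) (f : ℕ → ℝ) : Prop := Summable fun n => |f n| ^ p

/-- The `ℓ_p` quasi-norm, `0 < p < ∞`. -/
def lpNrm (p : ℝ) (f : ℕ → ℝ) : ℝ := (∑' n, |f n| ^ p) ^ (1 / p)

/-- Membership in `ℓ_p` for extended `p` (where `ℓ_∞` means `c₀`). -/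
def lpMemE (p : ℝ≥0∞) (f : ℕ → ℝ) : Prop :=
  if p = ⊤ then Filter.Tendsto f Filter.atTop (nhds 0) else lpMem p.toReal f

/-- The `ℓ_p` quasi-norm for extended `p`. -/
def lpNrmE (p : ℝ≥0∞) (f : ℕ → ℝ) : ℝ :=
  if p = ⊤ then ⨆ n, |f n| else lpNrm p.toReal f

/-- Membership in the matrix space `Z_{p,q} = ℓ_q(ℓ_p)` (with `ℓ_∞` meaning `c₀`). -/
def ZMem (p q : ℝ≥0∞) (f : ℕ → ℕ → ℝ) : Prop :=
  (∀ n, lpMemE p (f n)) ∧ lpMemE q (fun n => lpNrmE p (f n))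

/-- The quasi-norm of `Z_{p,q} = ℓ_q(ℓ_p)`. -/
def ZNrm (p q : ℝ≥0∞) (f : ℕ → ℕ → ℝ) : ℝ := lpNrmE q (fun n => lpNrmE p (f n))

/-!
The point is that a set `A` of at most `M_{r+1}` elements lying beyond the first `r` blocks meets
the block `σ_{r+i}` in a negligible set. By `M_r ≲ N_{r+1}` the lengths `N_n` grow geometrically, so
`|A ∩ σ_{r+i}| / N_{r+i} ≲ θ ^ i` for some `θ < 1`, and the two regularity properties turn this into
a geometric bound for the ratios of both `Λ` and `Λ*`. Hence `Q_σ(1_A f)` differs from `1_A Q_σ f`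
only by averages whose norms are dominated by a geometric series, and so are the terms of
`H(1_A f)`; such series converge also in a quasi-Banach space. Sets with `|A| < min A` are of this
kind, and an initial interval of `ℕ` is a union of blocks followed by such a set. For unions of the
first `r` blocks the restriction is the `r`-th partial sum operator of `𝒳`, so the unit vectors form
a Schauder basis.
-/

section QuasiNorms

open Filter Topology Uniformity

namespace QuasiBanach

variable (B : QuasiBanach X)

theorem q_zero : B.q 0 = 0 := (B.q_eq_zero_iff 0).2 rfl

theorem q_neg (x : X) : B.q (-x) = B.q x := by simpa using B.q_smul (-1) x

theorem q_sub_comm (x y : X) : B.q (x - y) = B.q (y - x) := by rw [← B.q_neg, neg_sub]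

theorem kappa_nonneg : 0 ≤ B.kappa := zero_le_one.trans B.one_le_kappa

theorem q_sub_le (x y : X) : B.q (x - y) ≤ B.kappa * (B.q x + B.q y) := by
  simpa only [sub_eq_add_neg, B.q_neg] using B.q_triangle x (-y)

theorem q_sub_le_of_mid (x y z : X) : B.q (x - z) ≤ B.kappa * (B.q (x - y) + B.q (y - z)) := by
  simpa only [sub_add_sub_cancel] using B.q_triangle (x - y) (y - z)

theorem q_sum_le {ι : Type*} (s : Finset ι) (y : ι → X) :
    B.q (∑ i ∈ s, y i) ≤ B.kappa ^ s.card * ∑ i ∈ s, B.q (y i) := by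
  induction s using Finset.induction_on with
  | empty => simp [B.q_zero]
  | insert a s ha ih =>
    rw [Finset.sum_insert ha, Finset.sum_insert ha, Finset.card_insert_of_notMem ha, pow_succ',
      mul_assoc, mul_add (B.kappa ^ s.card)]
    have h_one : B.q (y a) ≤ B.kappa ^ s.card * B.q (y a) :=
      le_mul_of_one_le_left (B.q_nonneg _) (one_le_pow₀ B.one_le_kappa)
    exact (B.q_triangle _ _).trans (mul_le_mul_of_nonneg_left (add_le_add h_one ih) B.kappa_nonneg)

theorem q_sum_range_le_of_le {a : ℝ} {y : ℕ → X} (hy : ∀ i, B.q (y i) ≤ a) {n L : ℕ}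
    (hn : n ≤ L) : B.q (∑ i ∈ Finset.range n, y i) ≤ B.kappa ^ L * L * a := by
  have ha : 0 ≤ a := (B.q_nonneg _).trans (hy 0)
  calc B.q (∑ i ∈ Finset.range n, y i)
      ≤ B.kappa ^ n * ∑ i ∈ Finset.range n, B.q (y i) := by
        simpa using B.q_sum_le (Finset.range n) y
    _ ≤ B.kappa ^ n * (n * a) := by
        have := Finset.sum_le_card_nsmul (Finset.range n) _ a fun i _ => hy i
        rw [Finset.card_range, nsmul_eq_mul] at this
        exact mul_le_mul_of_nonneg_left this (pow_nonneg B.kappa_nonneg n)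
    _ ≤ B.kappa ^ L * (L * a) := by
        have := pow_nonneg B.kappa_nonneg L
        gcongr
        exact B.one_le_kappa
    _ = B.kappa ^ L * L * a := by ring

/-- If `κ η ^ L ≤ 1 / 2`, cutting the sum into blocks of length `L` turns the constants lost in
the quasi-triangle inequality into a convergent geometric series. -/
theorem q_sum_range_le_of_geometric {η : ℝ} (hη₀ : 0 ≤ η) (hη₁ : η < 1) {L : ℕ}
    (hL : B.kappa * η ^ L ≤ 1 / 2) {a : ℝ} {y : ℕ → X} (hy : ∀ i, B.q (y i) ≤ a * η ^ i) (n : ℕ) :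
    B.q (∑ i ∈ Finset.range n, y i) ≤ 2 * B.kappa * (B.kappa ^ L * L) * a := by
  have hκ := B.one_le_kappa
  have hL_pos : 0 < L := by
    rcases L.eq_zero_or_pos with rfl | h
    · rw [pow_zero] at hL
      linarith
    · exact h
  induction n using Nat.strong_induction_on generalizing a y with
  | _ n ih =>
    have ha : 0 ≤ a := by simpa using (B.q_nonneg _).trans (hy 0)
    set T : ℝ := B.kappa ^ L * L
    have hT_nonneg : 0 ≤ T := mul_nonneg (pow_nonneg B.kappa_nonneg L) L.cast_nonneg
    have h_short : ∀ m ≤ L, B.q (∑ i ∈ Finset.range m, y i) ≤ T * a := fun m hm =>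
      B.q_sum_range_le_of_le
        (fun i => (hy i).trans (mul_le_of_le_one_right ha (pow_le_one₀ hη₀ hη₁.le))) hm
    rcases le_or_gt n L with hn | hn
    · refine (h_short n hn).trans (mul_le_mul_of_nonneg_right ?_ ha)
      exact le_mul_of_one_le_left hT_nonneg (by linarith)
    obtain ⟨m, rfl⟩ := Nat.exists_eq_add_of_lt hn
    have h_tail := ih (m + 1) (by omega) (a := a * η ^ L) (y := fun i => y (L + i)) fun i => by
      rw [mul_assoc, ← pow_add]
      exact hy (L + i)
    rw [add_assoc, Finset.sum_range_add]
    calc _ ≤ B.kappa * (T * a + 2 * B.kappa * T * (a * η ^ L)) :=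
          (B.q_triangle _ _).trans
            (mul_le_mul_of_nonneg_left (add_le_add (h_short L le_rfl) h_tail) B.kappa_nonneg)
      _ = B.kappa * T * a + 2 * B.kappa * T * a * (B.kappa * η ^ L) := by ring
      _ ≤ B.kappa * T * a + 2 * B.kappa * T * a * (1 / 2) := by gcongr
      _ = 2 * B.kappa * T * a := by ring

theorem exists_q_sum_Ico_le_of_geometric {η : ℝ} (hη₀ : 0 ≤ η) (hη₁ : η < 1) :
    ∃ K : ℝ, 0 ≤ K ∧ ∀ (a : ℝ) (r : ℕ) (y : ℕ → X), (∀ i, B.q (y (r + i)) ≤ a * η ^ i) →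
      ∀ R, B.q (∑ n ∈ Finset.Ico r R, y n) ≤ K * a := by
  have hκ := B.one_le_kappa
  obtain ⟨L, hL⟩ : ∃ L : ℕ, η ^ L < 1 / (2 * B.kappa) :=
    exists_pow_lt_of_lt_one (by positivity) hη₁
  have hL : B.kappa * η ^ L ≤ 1 / 2 := by
    rw [lt_div_iff₀ (by positivity)] at hL
    linarith
  refine ⟨2 * B.kappa * (B.kappa ^ L * L), by positivity, fun a r y hy R => ?_⟩
  rw [Finset.sum_Ico_eq_sum_range]
  exact B.q_sum_range_le_of_geometric hη₀ hη₁ hL hy (R - r)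

/-! ### Uniform boundedness -/

theorem hasBasis_comap_q_sub :
    (comap (fun p : X × X => B.q (p.1 - p.2)) (𝓝 0)).HasBasis (fun ε : ℝ => 0 < ε)
      fun ε => {p | B.q (p.1 - p.2) < ε} := by
  refine (Metric.nhds_basis_ball.comap _).congr (fun _ => Iff.rfl) fun ε _ => ?_
  ext p
  simp [abs_of_nonneg (B.q_nonneg _)]

/-- The uniform structure whose entourages are generated by the sets `{(x, y) | q (x - y) < ε}`.
It gives access to the Baire category theorem. -/
abbrev uniformSpace : UniformSpace X :=
  .ofCore
    { uniformity := comap (fun p : X × X => B.q (p.1 - p.2)) (𝓝 0)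
      refl := B.hasBasis_comap_q_sub.ge_iff.2 fun ε hε =>
        SetRel.id_subset_iff.2 ⟨fun x => by simpa [B.q_zero] using hε⟩
      symm := tendsto_comap_iff.2 (tendsto_comap.congr fun p => B.q_sub_comm p.1 p.2)
      comp := by
        refine ((B.hasBasis_comap_q_sub.lift' (monotone_id.relComp monotone_id)).le_basis_iff
          B.hasBasis_comap_q_sub).2 fun ε hε => ?_
        have hκ := B.one_le_kappa
        refine ⟨ε / (2 * B.kappa), by positivity, ?_⟩
        rintro ⟨x, z⟩ ⟨y, hxy, hyz⟩
        simp only [id_eq, Set.mem_ofPred_eq] at hxy hyz ⊢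
        calc B.q (x - z) ≤ B.kappa * (B.q (x - y) + B.q (y - z)) := B.q_sub_le_of_mid x y z
          _ < B.kappa * (ε / (2 * B.kappa) + ε / (2 * B.kappa)) := by gcongr
          _ = ε := by field_simp; ring }

theorem hasBasis_nhds (x : X) :
    (@nhds X B.uniformSpace.toTopologicalSpace x).HasBasis (fun ε : ℝ => 0 < ε)
      fun ε => {y | B.q (y - x) < ε} := by
  let _ := B.uniformSpace
  refine (nhds_basis_uniformity' B.hasBasis_comap_q_sub).congr (fun _ => Iff.rfl) fun ε _ => ?_
  ext y
  simp only [UniformSpace.ball, Set.mem_preimage, Set.mem_ofPred_eq, B.q_sub_comm x y]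

theorem baireSpace : @BaireSpace X B.uniformSpace.toTopologicalSpace := by
  let _ := B.uniformSpace
  have : (𝓤 X).IsCountablyGenerated := comap.isCountablyGenerated _ _
  have : CompleteSpace X := UniformSpace.complete_of_cauchySeq_tendsto fun u hu => by
    have hu' : QCauchy B.q u := by
      intro ε hε
      obtain ⟨n₀, h⟩ := B.hasBasis_comap_q_sub.cauchySeq_iff.1 hu ε hε
      exact ⟨n₀, fun m hm n hn => h m hm n hn⟩
    obtain ⟨x, hx⟩ := B.complete u hu'
    refine ⟨x, (B.hasBasis_nhds x).tendsto_right_iff.2 fun ε hε => ?_⟩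
    exact eventually_atTop.2 (hx ε hε)
  infer_instance

theorem exists_forall_dense_of_iUnion_eq_univ {E : ℕ → Set X} (hE : ⋃ k, E k = Set.univ) :
    ∃ (k : ℕ) (x₀ : X) (ε : ℝ), 0 < ε ∧
      ∀ x, B.q (x - x₀) < ε → ∀ δ > 0, ∃ e ∈ E k, B.q (e - x) < δ := by
  let _ := B.uniformSpace
  have _ := B.baireSpace
  obtain ⟨k, x₀, hx₀⟩ := nonempty_interior_of_iUnion_of_closed
    (fun k => isClosed_closure (s := E k))
    (Set.univ_subset_iff.1 (hE ▸ Set.iUnion_mono fun k => subset_closure))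
  obtain ⟨ε, hε, h_ball⟩ := (B.hasBasis_nhds x₀).mem_iff.1 (mem_interior_iff_mem_nhds.1 hx₀)
  exact ⟨k, x₀, ε, hε, fun x hx δ hδ =>
    (mem_closure_iff_nhds_basis (B.hasBasis_nhds x)).1 (h_ball hx) δ hδ⟩

theorem le_mul_q_of_forall_q_lt {w : X → ℝ} (h_smul : ∀ (a : ℝ) x, w (a • x) = |a| * w x)
    {M ε : ℝ} (hε : 0 < ε) (hM : ∀ x, B.q x < ε → w x ≤ M) (x : X) :
    w x ≤ 2 * M / ε * B.q x := by
  rcases (B.q_nonneg x).eq_or_lt with hx | hx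
  · have hw : w x = 0 := by
      rw [(B.q_eq_zero_iff x).1 hx.symm]
      simpa using h_smul 0 0
    rw [hw, ← hx, mul_zero]
  · have h_pos : 0 < ε / (2 * B.q x) := by positivity
    have h_scaled := hM ((ε / (2 * B.q x)) • x) (by
      rw [B.q_smul, abs_of_pos h_pos]
      field_simp
      linarith)
    rw [h_smul, abs_of_pos h_pos] at h_scaled
    field_simp at h_scaled ⊢
    linarith

/-- **Uniform boundedness principle** for a family `w` of bounded quasi-seminorms. -/
theorem exists_forall_le_mul_q {ι : Type*} {w : ι → X → ℝ} {K : ℝ} (hK : 0 ≤ K)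
    (h_smul : ∀ i (a : ℝ) x, w i (a • x) = |a| * w i x)
    (h_add : ∀ i x y, w i (x + y) ≤ K * (w i x + w i y))
    (h_bdd : ∀ i, ∃ C, ∀ x, w i x ≤ C * B.q x) (h_pointwise : ∀ x, ∃ C, ∀ i, w i x ≤ C) :
    ∃ C, 0 ≤ C ∧ ∀ i x, w i x ≤ C * B.q x := by
  have h_neg : ∀ i x, w i (-x) = w i x := fun i x => by simpa using h_smul i (-1) x
  obtain ⟨k, x₀, ε, hε, h_dense⟩ := B.exists_forall_dense_of_iUnion_eq_univ
    (E := fun k : ℕ => {x | ∀ i, w i x ≤ k}) <| Set.eq_univ_of_forall fun x => by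
      obtain ⟨C, hC⟩ := h_pointwise x
      obtain ⟨k, hk⟩ := exists_nat_ge C
      exact Set.mem_iUnion.2 ⟨k, fun i => (hC i).trans hk⟩
  have h_ball : ∀ x, B.q (x - x₀) < ε → ∀ i, w i x ≤ K * (k + 1) := fun x hx i => by
    obtain ⟨C, hC⟩ := h_bdd i
    obtain ⟨e, he, hex⟩ := h_dense x hx (1 / (|C| + 1)) (by positivity)
    have h_small : w i (x - e) ≤ 1 := by
      calc w i (x - e) = w i (e - x) := by rw [← h_neg, neg_sub]
        _ ≤ |C| * B.q (e - x) :=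
          (hC _).trans (mul_le_mul_of_nonneg_right (le_abs_self C) (B.q_nonneg _))
        _ ≤ (|C| + 1) * (1 / (|C| + 1)) :=
          mul_le_mul (le_add_of_nonneg_right zero_le_one) hex.le (B.q_nonneg _) (by positivity)
        _ = 1 := by field_simp
    calc w i x = w i (e + (x - e)) := by rw [add_sub_cancel]
      _ ≤ K * (w i e + w i (x - e)) := h_add _ _ _
      _ ≤ K * (k + 1) := by gcongr; exact he i
  have h_zero_ball : ∀ i x, B.q x < ε → w i x ≤ K * (K * (k + 1) + K * (k + 1)) := fun i x hx => by
    have h_center := h_ball x₀ (by simpa [B.q_zero] using hε) i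
    have h_translate := h_ball (x + x₀) (by simpa using hx) i
    calc w i x = w i (x + x₀ + -x₀) := by rw [add_neg_cancel_right]
      _ ≤ K * (w i (x + x₀) + w i (-x₀)) := h_add _ _ _
      _ ≤ _ := by rw [h_neg]; gcongr
  exact ⟨_, abs_nonneg _, fun i x =>
    (B.le_mul_q_of_forall_q_lt (h_smul i) hε (h_zero_ball i) x).trans
      (mul_le_mul_of_nonneg_right (le_abs_self _) (B.q_nonneg x))⟩

end QuasiBanach

end QuasiNorms

section Bases

open Finset

namespace BioSystem

theorem proj_add (b : BioSystem mem nrm) (A : Finset ℕ) {f g : X} (hf : mem f) (hg : mem g) :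
    b.proj A (f + g) = b.proj A f + b.proj A g := by
  simp only [proj, b.coord_add _ f g hf hg, add_smul, sum_add_distrib]

theorem proj_smul (b : BioSystem mem nrm) (A : Finset ℕ) (a : ℝ) {f : X} (hf : mem f) :
    b.proj A (a • f) = a • b.proj A f := by
  simp only [proj, b.coord_smul _ a f hf, mul_smul, smul_sum]

theorem exists_q_proj_le {B : QuasiBanach X} (b : BioSystem (fun _ : X => True) B.q)
    (A : Finset ℕ) : ∃ C, ∀ f, B.q (b.proj A f) ≤ C * B.q f := by
  choose C hC using b.coord_bdd
  refine ⟨B.kappa ^ #A * ∑ n ∈ A, C n * B.q (b.vec n), fun f => (B.q_sum_le _ _).trans ?_⟩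
  rw [mul_assoc, sum_mul]
  refine mul_le_mul_of_nonneg_left (sum_le_sum fun n _ => ?_) (pow_nonneg B.kappa_nonneg _)
  rw [B.q_smul]
  have := B.q_nonneg (b.vec n)
  nlinarith [hC n f trivial]

end BioSystem

namespace QBasis

variable {B : QuasiBanach X} (b : QBasis B)

theorem exists_q_proj_range_le_of_mem (f : X) : ∃ C, ∀ m, B.q (b.proj (range m) f) ≤ C := by
  obtain ⟨n₀, h⟩ := b.expansion f trivial 1 one_pos
  refine ⟨max (∑ m ∈ range n₀, B.q (b.proj (range m) f)) (B.kappa * (1 + B.q f)), fun m => ?_⟩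
  rcases lt_or_ge m n₀ with hm | hm
  · exact le_max_of_le_left
      (single_le_sum (f := fun m => B.q (b.proj (range m) f)) (fun _ _ => B.q_nonneg _)
        (mem_range.2 hm))
  · refine le_max_of_le_right ?_
    have h_near : B.q (b.proj (range m) f - f) ≤ 1 := (h m hm).le
    calc B.q (b.proj (range m) f) = B.q (b.proj (range m) f - f + f) := by rw [sub_add_cancel]
      _ ≤ B.kappa * (B.q (b.proj (range m) f - f) + B.q f) := B.q_triangle _ _
      _ ≤ B.kappa * (1 + B.q f) :=
        mul_le_mul_of_nonneg_left (add_le_add_left h_near _) B.kappa_nonneg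

theorem exists_forall_q_proj_range_le :
    ∃ C, 0 ≤ C ∧ ∀ m f, B.q (b.proj (range m) f) ≤ C * B.q f :=
  B.exists_forall_le_mul_q (w := fun m f => B.q (b.proj (range m) f)) B.kappa_nonneg
    (fun m a f => by rw [b.proj_smul _ a trivial, B.q_smul])
    (fun m f g => by rw [b.proj_add _ trivial trivial]; exact B.q_triangle _ _)
    (fun m => b.exists_q_proj_le (range m)) b.exists_q_proj_range_le_of_mem

theorem exists_forall_abs_coord_le (h_semi : b.SemiNormalized) :
    ∃ C, 0 ≤ C ∧ ∀ n f, |b.coord n f| ≤ C * B.q f := by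
  obtain ⟨c, _, hc, h_vec⟩ := h_semi
  obtain ⟨C, hC₀, hC⟩ := b.exists_forall_q_proj_range_le
  refine ⟨B.kappa * (C + C) / c, by have := B.kappa_nonneg; positivity, fun n f => ?_⟩
  have h_diff : b.coord n f • b.vec n = b.proj (range (n + 1)) f - b.proj (range n) f := by
    rw [BioSystem.proj, BioSystem.proj, sum_range_succ, add_sub_cancel_left]
  rw [div_mul_eq_mul_div, le_div_iff₀ hc]
  calc |b.coord n f| * c ≤ |b.coord n f| * B.q (b.vec n) := by gcongr; exact (h_vec n).1
    _ = B.q (b.proj (range (n + 1)) f - b.proj (range n) f) := by rw [← B.q_smul, h_diff]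
    _ ≤ B.kappa * (B.q (b.proj (range (n + 1)) f) + B.q (b.proj (range n) f)) := B.q_sub_le _ _
    _ ≤ B.kappa * (C * B.q f + C * B.q f) :=
      mul_le_mul_of_nonneg_left (add_le_add (hC _ f) (hC _ f)) B.kappa_nonneg
    _ = B.kappa * (C + C) * B.q f := by ring

end QBasis

end Bases

section SubsymmetricSpaces

open Finset Function

theorem spread_apply {φ : ℕ → ℕ} (hφ : Injective φ) (ε f : ℕ → ℝ) (n : ℕ) :
    spread φ ε f (φ n) = ε n * f n := by
  have h : ∃ k, φ k = φ n := ⟨n, rfl⟩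
  rw [spread, dif_pos h, hφ h.choose_spec]

theorem spread_one {φ : ℕ → ℕ} (hφ : Injective φ) (f : ℕ → ℝ) : spread φ 1 f = extend φ f 0 := by
  funext j
  by_cases h : ∃ n, φ n = j
  · obtain ⟨n, rfl⟩ := h
    rw [spread_apply hφ, hφ.extend_apply, Pi.one_apply, one_mul]
  · rw [spread, dif_neg h, extend_apply' _ _ _ h, Pi.zero_apply]

theorem indic_eq_indicator (m : ℕ) : indic m = Set.indicator (range m : Set ℕ) 1 := by
  funext n
  simp [indic, Set.indicator_apply]

theorem hasFiniteSupport_indicator_finset (A : Finset ℕ) (f : ℕ → ℝ) :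
    HasFiniteSupport (Set.indicator (A : Set ℕ) f) :=
  A.finite_toSet.subset Set.support_indicator_subset

theorem hasFiniteSupport_indicator {f : ℕ → ℝ} (hf : f.HasFiniteSupport) (A : Set ℕ) :
    (A.indicator f).HasFiniteSupport :=
  hf.subset (Set.support_indicator.trans_subset Set.inter_subset_right)

theorem hasFiniteSupport_const_smul (c : ℝ) {f : ℕ → ℝ} (hf : f.HasFiniteSupport) :
    (c • f).HasFiniteSupport :=
  hf.smul_right fun _ => c

theorem hasFiniteSupport_extend {f : ℕ → ℝ} (hf : f.HasFiniteSupport) {φ : ℕ → ℕ}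
    (hφ : Injective φ) :
    (extend φ f 0).HasFiniteSupport :=
  (hf.image φ).subset fun j hj => by
    by_cases h : ∃ n, φ n = j
    · obtain ⟨n, rfl⟩ := h
      rw [mem_support, hφ.extend_apply] at hj
      exact Set.mem_image_of_mem φ hj
    · exact absurd (extend_apply' _ _ _ h) hj

theorem exists_strictMono_image_range (A : Finset ℕ) :
    ∃ φ : ℕ → ℕ, StrictMono φ ∧ (range #A).image φ = A := by
  induction A using Finset.induction_on_max with
  | empty => exact ⟨id, strictMono_id, by simp⟩
  | insert a s ha ih =>
    obtain ⟨φ, hφ, h_image⟩ := ih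
    have h_lt : ∀ i < #s, φ i < a := fun i hi =>
      ha _ (h_image ▸ mem_image_of_mem φ (mem_range.2 hi))
    refine ⟨fun i => if i < #s then φ i else a + (i - #s), fun i k hik => ?_, ?_⟩
    · have := hφ hik
      have := h_lt i
      grind
    · rw [card_insert_of_notMem fun h => (ha a h).false, range_add_one, image_insert,
        if_neg (by simp), Nat.sub_self, add_zero]
      congr 1
      conv_rhs => rw [← h_image]
      exact image_congr fun i hi => if_pos (mem_range.1 hi)

namespace SubsymmetricSpace

variable (S : SubsymmetricSpace)

theorem nrm_zero : S.nrm 0 = 0 := (S.nrm_eq_zero S.zero_mem).2 rfl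

variable {S} in
theorem sum_mem {ι : Type*} {s : Finset ι} {F : ι → ℕ → ℝ} (hF : ∀ i ∈ s, S.mem (F i)) :
    S.mem (∑ i ∈ s, F i) :=
  sum_induction F S.mem (fun _ _ => S.add_mem) S.zero_mem hF

theorem nrm_sum_le {ι : Type*} {s : Finset ι} {F : ι → ℕ → ℝ} (hF : ∀ i ∈ s, S.mem (F i)) :
    S.nrm (∑ i ∈ s, F i) ≤ ∑ i ∈ s, S.nrm (F i) :=
  le_sum_of_subadditive_on_pred S.nrm S.mem S.nrm_zero.le (fun _ _ => S.nrm_triangle)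
    (fun _ _ => S.add_mem) F hF

theorem mem_of_hasFiniteSupport {f : ℕ → ℝ} (hf : f.HasFiniteSupport) : S.mem f := by
  have h_fin : f.support.Finite := hf
  have h_sum : f = ∑ n ∈ h_fin.toFinset, f n • unitVec n := by
    funext k
    simp [Finset.sum_apply, unitVec]
  rw [h_sum]
  exact sum_mem fun n _ => S.smul_mem _ (S.unit_mem n)

theorem nrm_add_le {f g : ℕ → ℝ} (hf : f.HasFiniteSupport) (hg : g.HasFiniteSupport) :
    S.nrm (f + g) ≤ S.nrm f + S.nrm g :=
  S.nrm_triangle (S.mem_of_hasFiniteSupport hf) (S.mem_of_hasFiniteSupport hg)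

theorem nrm_sub_le {f g : ℕ → ℝ} (hf : f.HasFiniteSupport) (hg : g.HasFiniteSupport) :
    S.nrm (f - g) ≤ S.nrm f + S.nrm g := by
  have h_neg : S.nrm (-g) = S.nrm g := by simpa using S.nrm_smul (-1) g
  rw [sub_eq_add_neg, ← h_neg]
  exact S.nrm_add_le hf (by fun_prop)

theorem nrm_extend {f : ℕ → ℝ} (hf : f.HasFiniteSupport) {φ : ℕ → ℕ} (hφ : StrictMono φ) :
    S.nrm (extend φ f 0) = S.nrm f := by
  rw [← spread_one hφ.injective]
  exact (S.subsym (S.mem_of_hasFiniteSupport hf) 1 (by simp) φ hφ).2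

theorem nrm_mul_of_abs_eq_one {f : ℕ → ℝ} (hf : f.HasFiniteSupport) {ε : ℕ → ℝ}
    (hε : ∀ n, |ε n| = 1) : S.nrm (ε * f) = S.nrm f := by
  have h_spread : spread id ε f = ε * f := funext (spread_apply injective_id ε f)
  rw [← h_spread]
  exact (S.subsym (S.mem_of_hasFiniteSupport hf) ε hε id strictMono_id).2

/-! ### Lattice structure -/

/-- `update g a c` is a convex combination of `g` and of `g` with the sign of its `a`-th entry
changed. -/
theorem nrm_update_le {g : ℕ → ℝ} (hg : g.HasFiniteSupport) {a : ℕ} {c : ℝ} (hc : |c| ≤ |g a|) :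
    S.nrm (update g a c) ≤ S.nrm g := by
  set t : ℝ := c / g a
  set ε : ℕ → ℝ := update 1 a (-1)
  have ht : |t| ≤ 1 := by
    rw [abs_div]
    exact div_le_one_of_le₀ hc (abs_nonneg _)
  have htg : t * g a = c := div_mul_cancel_of_imp fun h => by simpa [h] using hc
  have h_combination : update g a c = ((1 + t) / 2) • g + ((1 - t) / 2) • (ε * g) := by
    funext n
    by_cases hn : n = a
    · subst hn
      simp only [update_self, ε, Pi.add_apply, Pi.smul_apply, Pi.mul_apply, smul_eq_mul, ← htg]
      ring
    · simp only [update_of_ne hn, ε, Pi.add_apply, Pi.smul_apply, Pi.mul_apply, smul_eq_mul,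
        Pi.one_apply]
      ring
  obtain ⟨ht₁, ht₂⟩ := abs_le.1 ht
  have h_sign : S.nrm (ε * g) = S.nrm g := S.nrm_mul_of_abs_eq_one hg fun n => by
    by_cases hn : n = a <;> simp [ε, hn]
  rw [h_combination]
  refine (S.nrm_add_le (hasFiniteSupport_const_smul _ hg)
    (hasFiniteSupport_const_smul _ (hg.mul_right _))).trans ?_
  rw [S.nrm_smul, S.nrm_smul, h_sign, abs_of_nonneg (by linarith), abs_of_nonneg (by linarith)]
  linarith

theorem nrm_le_of_abs_le {f g : ℕ → ℝ} (hg : g.HasFiniteSupport) (h : ∀ n, |f n| ≤ |g n|) :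
    S.nrm f ≤ S.nrm g := by
  have h_piecewise : ∀ s : Finset ℕ, (s.piecewise f g).HasFiniteSupport ∧
      S.nrm (s.piecewise f g) ≤ S.nrm g := fun s => by
    induction s using Finset.induction_on with
    | empty => exact ⟨by simpa using hg, by simp⟩
    | insert a s ha ih =>
      rw [piecewise_insert]
      refine ⟨?_, (S.nrm_update_le ih.1 ?_).trans ih.2⟩
      · exact (ih.1.union (Set.finite_singleton a)).subset fun n hn => by
          by_cases h : n = a <;> simp_all
      · rw [piecewise_eq_of_notMem _ _ _ ha]
        exact h a
  have h_fin : g.support.Finite := hg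
  have hf : f = h_fin.toFinset.piecewise f g := by
    funext n
    by_cases hn : n ∈ h_fin.toFinset
    · rw [piecewise_eq_of_mem _ _ _ hn]
    · have hgn : g n = 0 := by simpa using hn
      rw [piecewise_eq_of_notMem _ _ _ hn, hgn]
      simpa [hgn] using h n
  rw [hf]
  exact (h_piecewise _).2

theorem nrm_indicator_le {f : ℕ → ℝ} (hf : f.HasFiniteSupport) (A : Set ℕ) :
    S.nrm (A.indicator f) ≤ S.nrm f :=
  S.nrm_le_of_abs_le hf fun n => by
    by_cases hn : n ∈ A <;> simp [hn]

theorem nrm_le_of_abs_le_comp {u v : ℕ → ℝ} (hv : v.HasFiniteSupport) {φ : ℕ → ℕ}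
    (hφ : StrictMono φ) (h : ∀ n, |u n| ≤ |v (φ n)|) : S.nrm u ≤ S.nrm v := by
  have hvφ : (v ∘ φ).HasFiniteSupport := hv.comp_of_injective hφ.injective
  calc S.nrm u ≤ S.nrm (v ∘ φ) := S.nrm_le_of_abs_le hvφ h
    _ = S.nrm (extend φ (v ∘ φ) 0) := (S.nrm_extend hvφ hφ).symm
    _ ≤ S.nrm v := S.nrm_le_of_abs_le hv fun j => by
      by_cases hj : ∃ n, φ n = j
      · obtain ⟨n, rfl⟩ := hj
        rw [hφ.injective.extend_apply, comp_apply]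
      · rw [extend_apply' _ _ _ hj, Pi.zero_apply, abs_zero]
        exact abs_nonneg _

end SubsymmetricSpace

end SubsymmetricSpaces

section FundamentalFunction

open Finset Function

namespace SubsymmetricSpace

variable (S : SubsymmetricSpace)

theorem hasFiniteSupport_indic (m : ℕ) : (indic m).HasFiniteSupport := by
  rw [indic_eq_indicator]
  exact hasFiniteSupport_indicator_finset _ _

theorem Lam_nonneg (m : ℕ) : 0 ≤ S.Lam m := S.nrm_nonneg _

theorem Lam_zero : S.Lam 0 = 0 := by
  rw [Lam, show indic 0 = 0 from funext fun _ => rfl, S.nrm_zero]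

theorem Lam_pos {m : ℕ} (hm : 0 < m) : 0 < S.Lam m := by
  refine (S.Lam_nonneg m).lt_of_ne' fun h => ?_
  have h_zero := (S.nrm_eq_zero (S.mem_of_hasFiniteSupport (hasFiniteSupport_indic m))).1 h
  simpa [indic, hm] using congrFun h_zero 0

theorem Lam_mono : Monotone S.Lam := fun m n hmn =>
  S.nrm_le_of_abs_le (hasFiniteSupport_indic n) fun k => by grind [indic]

theorem nrm_indicator_one (A : Finset ℕ) : S.nrm (Set.indicator A 1) = S.Lam #A := by
  obtain ⟨φ, hφ, hA⟩ := exists_strictMono_image_range A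
  have h_extend : Set.indicator A 1 = extend φ (indic #A) 0 := by
    funext j
    by_cases hj : ∃ n, φ n = j
    · obtain ⟨n, rfl⟩ := hj
      have h_mem : φ n ∈ A ↔ n < #A := by
        have := hφ.injective.mem_finset_image (s := range #A) (a := n)
        rwa [hA, mem_range] at this
      simp [hφ.injective.extend_apply, indic, Set.indicator_apply, h_mem]
    · rw [extend_apply' _ _ _ hj, Set.indicator_of_notMem, Pi.zero_apply]
      rw [mem_coe, ← hA, mem_image]
      exact fun ⟨n, _, hn⟩ => hj ⟨n, hn⟩
  rw [h_extend, S.nrm_extend (hasFiniteSupport_indic _) hφ, Lam]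

theorem nrm_smul_indicator_one (c : ℝ) (A : Finset ℕ) :
    S.nrm (c • Set.indicator A 1) = |c| * S.Lam #A := by
  rw [S.nrm_smul, S.nrm_indicator_one]

theorem subadditive_Lam : Subadditive S.Lam := fun m n => by
  have h_split : indic (m + n) = indic m + Set.indicator (Ico m (m + n)) 1 := by
    funext k
    simp only [indic, Pi.add_apply, Set.indicator_apply, mem_coe, mem_Ico, Pi.one_apply]
    grind
  calc S.Lam (m + n) ≤ S.nrm (indic m) + S.nrm (Set.indicator (Ico m (m + n)) 1) := by
        rw [Lam, h_split]
        exact S.nrm_add_le (hasFiniteSupport_indic m) (hasFiniteSupport_indicator_finset _ _)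
    _ = S.Lam m + S.Lam n := by rw [S.nrm_indicator_one, Nat.card_Ico, Nat.add_sub_cancel_left]; rfl

theorem mul_Lam_le {k N : ℕ} (hkN : k ≤ N) : k * S.Lam N ≤ 2 * N * S.Lam k := by
  rcases k.eq_zero_or_pos with rfl | hk
  · simp [S.Lam_zero]
  have h_Lam : S.Lam N ≤ (N / k : ℕ) * S.Lam k + S.Lam k :=
    calc S.Lam N = S.Lam (N / k * k + N % k) := by rw [Nat.div_add_mod']
      _ ≤ (N / k : ℕ) * S.Lam k + S.Lam (N % k) := S.subadditive_Lam.apply_mul_add_le _ _ _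
      _ ≤ (N / k : ℕ) * S.Lam k + S.Lam k := by
        gcongr
        exact S.Lam_mono (Nat.mod_lt N hk).le
  have h_count : (k * (N / k : ℕ) + k : ℝ) ≤ 2 * N := by
    have := Nat.mul_div_le N k
    exact_mod_cast (by lia : k * (N / k) + k ≤ 2 * N)
  calc k * S.Lam N ≤ k * ((N / k : ℕ) * S.Lam k + S.Lam k) := by gcongr
    _ = (k * (N / k : ℕ) + k) * S.Lam k := by ring
    _ ≤ 2 * N * S.Lam k := mul_le_mul_of_nonneg_right h_count (S.Lam_nonneg k)

/-! ### Averages -/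

theorem extend_add_right_apply (d : ℕ) (f : ℕ → ℝ) (n : ℕ) :
    extend (· + d) f 0 n = if d ≤ n then f (n - d) else 0 := by
  split_ifs with h
  · conv_lhs => rw [← Nat.sub_add_cancel h]
    exact (add_left_injective d).extend_apply f 0 (n - d)
  · exact extend_apply' _ _ _ fun ⟨m, hm⟩ => h (hm ▸ Nat.le_add_left d m)

/-- The `k` cyclic shifts of `f` on `[0, k)` add up to a constant sequence; the `s`-th of them is
the sum of the piece of `f` on `[s, k)` moved to the left by `s` and of the piece on `[0, s)` moved
to the right by `k - s`. -/
theorem sum_range_smul_indic (f : ℕ → ℝ) (k : ℕ) :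
    (∑ n ∈ range k, f n) • indic k = ∑ s ∈ range k,
      (Set.indicator (Ico s k : Set ℕ) f ∘ (· + s) +
        extend (· + (k - s)) (Set.indicator (range s : Set ℕ) f) 0) := by
  funext n
  simp only [Finset.sum_apply, Pi.add_apply, comp_apply, extend_add_right_apply, Pi.smul_apply,
    smul_eq_mul, Set.indicator_apply, mem_coe, mem_Ico, mem_range, indic]
  rcases le_or_gt k n with hn | hn
  · rw [if_neg hn.not_gt, mul_zero, sum_eq_zero fun s hs => ?_]
    grind
  · rw [if_pos hn, mul_one]
    obtain ⟨d, rfl⟩ := Nat.exists_eq_add_of_le hn.le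
    rw [sum_range_add, Nat.add_comm n d, sum_range_add, add_comm]
    congr 1 <;> refine sum_congr rfl fun s _ => ?_ <;> grind

theorem abs_sum_range_mul_Lam_le {f : ℕ → ℝ} (hf : f.HasFiniteSupport) (k : ℕ) :
    |∑ n ∈ range k, f n| * S.Lam k ≤ 2 * k * S.nrm f := by
  set left : ℕ → ℕ → ℝ := fun s => Set.indicator (Ico s k : Set ℕ) f ∘ (· + s)
  set right : ℕ → ℕ → ℝ := fun s =>
    extend (· + (k - s)) (Set.indicator (range s : Set ℕ) f) 0
  have h_left : ∀ s, S.nrm (left s) ≤ S.nrm f := fun s =>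
    (S.nrm_le_of_abs_le_comp (hasFiniteSupport_indicator_finset _ f) (add_left_strictMono (a := s))
      fun _ => le_rfl).trans (S.nrm_indicator_le hf _)
  have h_right : ∀ s, S.nrm (right s) ≤ S.nrm f := fun s => by
    rw [S.nrm_extend (hasFiniteSupport_indicator_finset _ f) add_left_strictMono]
    exact S.nrm_indicator_le hf _
  have h_fin_left : ∀ s, (left s).HasFiniteSupport := fun s =>
    (hasFiniteSupport_indicator_finset _ f).comp_of_injective (add_left_injective s)
  have h_fin_right : ∀ s, (right s).HasFiniteSupport := fun s =>
    hasFiniteSupport_extend (hasFiniteSupport_indicator_finset _ f) (add_left_injective _)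
  calc |∑ n ∈ range k, f n| * S.Lam k = S.nrm ((∑ n ∈ range k, f n) • indic k) :=
        (S.nrm_smul _ _).symm
    _ ≤ ∑ _ ∈ range k, (S.nrm f + S.nrm f) := by
      rw [sum_range_smul_indic]
      refine (S.nrm_sum_le fun s _ => ?_).trans (sum_le_sum fun s _ => ?_)
      · exact S.mem_of_hasFiniteSupport ((h_fin_left s).add (h_fin_right s))
      · exact (S.nrm_add_le (h_fin_left s) (h_fin_right s)).trans
          (add_le_add (h_left s) (h_right s))
    _ = 2 * k * S.nrm f := by
      rw [sum_const, card_range, nsmul_eq_mul]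
      ring

theorem abs_sum_mul_Lam_le {f : ℕ → ℝ} (hf : f.HasFiniteSupport) (A : Finset ℕ) :
    |∑ n ∈ A, f n| * S.Lam #A ≤ 2 * #A * S.nrm f := by
  obtain ⟨φ, hφ, hA⟩ := exists_strictMono_image_range A
  have h_sum : ∑ n ∈ A, f n = ∑ i ∈ range #A, (f ∘ φ) i := by
    conv_lhs => rw [← hA, sum_image hφ.injective.injOn]
    rfl
  rw [h_sum]
  refine (S.abs_sum_range_mul_Lam_le (hf.comp_of_injective hφ.injective) #A).trans ?_
  gcongr
  exact S.nrm_le_of_abs_le_comp hf hφ fun _ => le_rfl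

end SubsymmetricSpace

end FundamentalFunction

section Regularity

theorem two_pow_mul_le_of_two_mul_le {Γ : ℕ → ℝ} {b : ℕ} (hb₀ : 0 < b)
    (hb : ∀ m, 1 ≤ m → 2 * Γ m ≤ Γ (b * m)) (j : ℕ) {m : ℕ} (hm : 1 ≤ m) :
    2 ^ j * Γ m ≤ Γ (b ^ j * m) := by
  induction j with
  | zero => simp
  | succ j ih =>
    have := hb (b ^ j * m) (Nat.mul_pos (Nat.pow_pos hb₀) hm)
    rw [pow_succ', pow_succ', mul_assoc, mul_assoc]
    linarith

theorem LRP.exists_le_mul_rpow {Γ : ℕ → ℝ} (h : LRP Γ) (h_pos : ∀ m, 1 ≤ m → 0 < Γ m) {A : ℝ}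
    (h_mono : ∀ k N, 1 ≤ k → k ≤ N → Γ k ≤ A * Γ N) :
    ∃ C α : ℝ, 0 ≤ C ∧ 0 < α ∧
      ∀ k N : ℕ, 1 ≤ k → k ≤ N → Γ k ≤ C * (k / N : ℝ) ^ α * Γ N := by
  obtain ⟨b, hb₀, hb⟩ := h
  have hA : 0 < A := by
    have := h_mono 1 1 le_rfl le_rfl
    nlinarith [h_pos 1 le_rfl]
  have hb₂ : 2 ≤ b := by
    by_contra hlt
    obtain rfl : b = 1 := by lia
    have := hb 1 le_rfl
    linarith [h_pos 1 le_rfl]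
  have hb_cast : (1 : ℝ) < b := by exact_mod_cast hb₂
  have hα : 0 < Real.logb b 2 := Real.logb_pos hb_cast one_lt_two
  refine ⟨2 * A, Real.logb b 2, by positivity, hα, fun k N hk hkN => ?_⟩
  set j := Nat.log b (N / k)
  have h_lower : b ^ j * k ≤ N :=
    (Nat.le_div_iff_mul_le hk).1 (Nat.pow_log_le_self b (Nat.div_pos hkN hk).ne')
  have h_upper : N < b ^ (j + 1) * k :=
    (Nat.div_lt_iff_lt_mul hk).1 (Nat.lt_pow_succ_log_self hb₂ _)
  have hN_cast : (0 : ℝ) < N := by exact_mod_cast hk.trans hkN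
  have h_rpow : 1 ≤ 2 ^ (j + 1) * (k / N : ℝ) ^ Real.logb b 2 := by
    have h_pow : (2 : ℝ) ^ (j + 1) = ((b : ℝ) ^ (j + 1)) ^ Real.logb b 2 := by
      rw [← Real.rpow_pow_comm b.cast_nonneg,
        Real.rpow_logb (by positivity) hb_cast.ne' two_pos]
    rw [h_pow, ← Real.mul_rpow (by positivity) (by positivity)]
    refine Real.one_le_rpow ?_ hα.le
    rw [mul_div_assoc', one_le_div hN_cast]
    exact_mod_cast h_upper.le
  have h_pow_mul : 2 ^ j * Γ k ≤ A * Γ N :=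
    (two_pow_mul_le_of_two_mul_le hb₀ hb j hk).trans
      (h_mono _ _ (Nat.mul_pos (Nat.pow_pos hb₀) hk) h_lower)
  calc Γ k ≤ 2 ^ (j + 1) * (k / N : ℝ) ^ Real.logb b 2 * Γ k :=
        le_mul_of_one_le_left (h_pos k hk).le h_rpow
    _ = 2 * (k / N : ℝ) ^ Real.logb b 2 * (2 ^ j * Γ k) := by ring
    _ ≤ 2 * (k / N : ℝ) ^ Real.logb b 2 * (A * Γ N) := by gcongr
    _ = _ := by ring

theorem LRP.exists_le_geometric {Γ : ℕ → ℝ} (h : LRP Γ) (h_pos : ∀ m, 1 ≤ m → 0 < Γ m) {A : ℝ}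
    (h_mono : ∀ k N, 1 ≤ k → k ≤ N → Γ k ≤ A * Γ N) {θ K : ℝ} (hθ₀ : 0 ≤ θ) (hθ₁ : θ < 1)
    (hK : 0 ≤ K) :
    ∃ E η : ℝ, 0 ≤ E ∧ 0 ≤ η ∧ η < 1 ∧ ∀ i k N : ℕ, 1 ≤ k → k ≤ N → k ≤ K * θ ^ i * N →
      Γ k ≤ E * η ^ i * Γ N := by
  obtain ⟨C, α, hC, hα, h_rpow⟩ := h.exists_le_mul_rpow h_pos h_mono
  refine ⟨C * K ^ α, θ ^ α, by positivity, by positivity, Real.rpow_lt_one hθ₀ hθ₁ hα,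
    fun i k N hk hkN h_small => (h_rpow k N hk hkN).trans ?_⟩
  have hN_cast : (0 : ℝ) < N := by exact_mod_cast hk.trans hkN
  have h_ratio : (k / N : ℝ) ^ α ≤ K ^ α * (θ ^ α) ^ i := by
    rw [Real.rpow_pow_comm hθ₀, ← Real.mul_rpow hK (pow_nonneg hθ₀ i)]
    exact Real.rpow_le_rpow (by positivity) ((div_le_iff₀ hN_cast).2 h_small) hα.le
  refine mul_le_mul_of_nonneg_right ?_ (h_pos N (hk.trans hkN)).le
  rw [mul_assoc]
  exact mul_le_mul_of_nonneg_left h_ratio hC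

namespace SubsymmetricSpace

variable {S : SubsymmetricSpace}

theorem LamStar_pos {m : ℕ} (hm : 0 < m) : 0 < S.LamStar m :=
  div_pos (Nat.cast_pos.2 hm) (S.Lam_pos hm)

theorem lrp_LamStar (h : URP S.Lam) : LRP S.LamStar := by
  obtain ⟨b, hb₀, hb⟩ := h
  refine ⟨b, hb₀, fun m hm => ?_⟩
  have h_Lam := S.Lam_pos hm
  have h_Lam_mul := S.Lam_pos (Nat.mul_pos hb₀ hm)
  rw [LamStar, LamStar, mul_div_assoc', div_le_div_iff₀ h_Lam h_Lam_mul, Nat.cast_mul]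
  have := mul_le_mul_of_nonneg_left (hb m hm) (m.cast_nonneg (α := ℝ))
  linarith

theorem LamStar_le {k N : ℕ} (hk : 1 ≤ k) (hkN : k ≤ N) : S.LamStar k ≤ 2 * S.LamStar N := by
  rw [LamStar, LamStar, mul_div_assoc', div_le_div_iff₀ (S.Lam_pos hk) (S.Lam_pos (hk.trans hkN))]
  exact S.mul_Lam_le hkN

/-- A set of `k` elements is `δ`-negligible inside a block of `N` elements if passing from the
block to the subset gains a factor `δ` in each of the functions `Λ`, `Λ*` and `m ↦ m`. The
condition on `Λ*` is cleared of denominators so that it makes sense for `k = 0`. -/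
structure Negligible (S : SubsymmetricSpace) (δ : ℝ) (k N : ℕ) : Prop where
  Lam_le : S.Lam k ≤ δ * S.Lam N
  mul_Lam_le : k * S.Lam N ≤ δ * (N * S.Lam k)
  le : k ≤ δ * N

theorem exists_negligible (hLRP : LRP S.Lam) (hURP : URP S.Lam) {θ K : ℝ} (hθ₀ : 0 ≤ θ)
    (hθ₁ : θ < 1) (hK : 0 ≤ K) :
    ∃ E η : ℝ, 0 ≤ E ∧ 0 ≤ η ∧ η < 1 ∧ ∀ i k N : ℕ, k ≤ N → k ≤ K * θ ^ i * N →
      S.Negligible (E * η ^ i) k N := by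
  obtain ⟨E₁, η₁, hE₁, hη₁, hη₁', h_Lam⟩ := hLRP.exists_le_geometric (fun _ => S.Lam_pos) (A := 1)
    (fun k N _ hkN => by simpa using S.Lam_mono hkN) hθ₀ hθ₁ hK
  obtain ⟨E₂, η₂, hE₂, hη₂, hη₂', h_LamStar⟩ := (lrp_LamStar hURP).exists_le_geometric
    (fun _ => LamStar_pos) (fun _ _ => LamStar_le) hθ₀ hθ₁ hK
  refine ⟨E₁ + E₂ + K, max θ (max η₁ η₂), by positivity, by positivity, by simp [*],
    fun i k N hkN h_small => ?_⟩
  have h_le : ∀ {E' η' : ℝ}, E' ≤ E₁ + E₂ + K → 0 ≤ η' → η' ≤ max θ (max η₁ η₂) →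
      E' * η' ^ i ≤ (E₁ + E₂ + K) * max θ (max η₁ η₂) ^ i := fun hE hη hη_max => by
    gcongr
  set δ := (E₁ + E₂ + K) * max θ (max η₁ η₂) ^ i
  have hδ : 0 ≤ δ := by positivity
  have hN_nonneg : 0 ≤ (N : ℝ) * S.Lam k := mul_nonneg N.cast_nonneg (S.Lam_nonneg k)
  rcases k.eq_zero_or_pos with rfl | hk
  · refine ⟨?_, ?_, ?_⟩
    · rw [S.Lam_zero]
      exact mul_nonneg hδ (S.Lam_nonneg N)
    · simpa using mul_nonneg hδ hN_nonneg
    · simpa using mul_nonneg hδ N.cast_nonneg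
  · refine ⟨(h_Lam i k N hk hkN h_small).trans ?_, ?_, h_small.trans ?_⟩
    · exact mul_le_mul_of_nonneg_right (h_le (by linarith) hη₁ (by simp)) (S.Lam_nonneg N)
    · have h_div := h_LamStar i k N hk hkN h_small
      rw [LamStar, LamStar, mul_div_assoc',
        div_le_div_iff₀ (S.Lam_pos hk) (S.Lam_pos (hk.trans_le hkN)), mul_assoc] at h_div
      exact h_div.trans (mul_le_mul_of_nonneg_right (h_le (by linarith) hη₂ (by simp)) hN_nonneg)
    · exact mul_le_mul_of_nonneg_right (h_le (by linarith) hθ₀ (by simp)) N.cast_nonneg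

end SubsymmetricSpace

end Regularity

section OrderedPartitions

open Finset Function

namespace OrderedPartition

variable (σ : OrderedPartition)

theorem N_pos (n : ℕ) : 0 < σ.N n := (σ.nonempty n).card_pos

theorem M_succ (r : ℕ) : σ.M (r + 1) = σ.M r + σ.N r := sum_range_succ _ _

theorem lt_of_mem_part {m n i k : ℕ} (hmn : m < n) (hi : i ∈ σ.part m) (hk : k ∈ σ.part n) :
    i < k := by
  induction n, hmn using Nat.le_induction generalizing k with
  | base => exact σ.ordered m i hi k hk
  | succ n _ ih =>
    obtain ⟨l, hl⟩ := σ.nonempty n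
    exact (ih hl).trans (σ.ordered n l hl k hk)

theorem eq_of_mem_part {m n k : ℕ} (hm : k ∈ σ.part m) (hn : k ∈ σ.part n) : m = n := by
  rcases lt_trichotomy m n with h | h | h
  · exact absurd (σ.lt_of_mem_part h hm hn) (lt_irrefl k)
  · exact h
  · exact absurd (σ.lt_of_mem_part h hn hm) (lt_irrefl k)

theorem biUnion_part (r : ℕ) : (range r).biUnion σ.part = range (σ.M r) := by
  set U := (range r).biUnion σ.part
  have h_card : #U = σ.M r := card_biUnion fun m _ n _ hmn =>
    disjoint_left.2 fun _ hm hn => hmn (σ.eq_of_mem_part hm hn)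
  have h_subset : ∀ k ∈ U, range (k + 1) ⊆ U := fun k hk i hi => by
    obtain ⟨n, hn, hkn⟩ := mem_biUnion.1 hk
    obtain ⟨m, hm⟩ := σ.covers i
    refine mem_biUnion.2 ⟨m, ?_, hm⟩
    by_contra h
    have := σ.lt_of_mem_part (by grind : n < m) hkn hm
    grind
  refine eq_of_subset_of_card_le (fun k hk => ?_) (by rw [card_range, h_card])
  have := card_le_card (h_subset k hk)
  rw [card_range, h_card] at this
  exact mem_range.2 this

theorem lt_M_iff {n k r : ℕ} (hk : k ∈ σ.part n) : k < σ.M r ↔ n < r := by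
  rw [← mem_range, ← biUnion_part, mem_biUnion]
  constructor
  · rintro ⟨m, hm, hkm⟩
    exact σ.eq_of_mem_part hk hkm ▸ mem_range.1 hm
  · exact fun h => ⟨n, mem_range.2 h, hk⟩

theorem exists_M_le_and_lt_M_succ (k : ℕ) : ∃ r, σ.M r ≤ k ∧ k < σ.M (r + 1) := by
  obtain ⟨n, hn⟩ := σ.covers k
  exact ⟨n, not_lt.1 fun h => ((σ.lt_M_iff hn).1 h).false, (σ.lt_M_iff hn).2 n.lt_succ_self⟩

theorem finite_setOf_exists_mem_part {A : Set ℕ} (hA : A.Finite) :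
    {n | ∃ k ∈ σ.part n, k ∈ A}.Finite := by
  choose index h_index using σ.covers
  refine (hA.image index).subset ?_
  rintro n ⟨k, hk, hkA⟩
  exact ⟨k, hkA, σ.eq_of_mem_part (h_index k) hk⟩

theorem exists_M_succ_le_geometric (h : ∃ c : ℝ, ∀ r, (σ.M r : ℝ) ≤ c * σ.N r) :
    ∃ θ K : ℝ, 0 ≤ θ ∧ θ < 1 ∧ 0 ≤ K ∧ ∀ r i, (σ.M (r + 1) : ℝ) ≤ K * θ ^ i * σ.N (r + i) := by
  obtain ⟨c, hc⟩ := h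
  have hc₀ : 0 ≤ c := nonneg_of_mul_nonneg_left ((Nat.cast_nonneg _).trans (hc 0))
    (Nat.cast_pos.2 (σ.N_pos 0))
  have h_step : ∀ r, (σ.M r : ℝ) ≤ c / (c + 1) * σ.M (r + 1) := fun r => by
    rw [div_mul_eq_mul_div, le_div_iff₀ (by positivity), M_succ, Nat.cast_add]
    linarith [hc r]
  have h_iterate : ∀ r i, (σ.M r : ℝ) ≤ (c / (c + 1)) ^ i * σ.M (r + i) := fun r i => by
    induction i with
    | zero => simp
    | succ i ih =>
      rw [pow_succ, mul_assoc]
      exact ih.trans (mul_le_mul_of_nonneg_left (h_step (r + i)) (by positivity))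
  refine ⟨c / (c + 1), c + 1, by positivity, (div_lt_one (by positivity)).2 (by linarith),
    by positivity, fun r i => (h_iterate (r + 1) i).trans ?_⟩
  rw [mul_comm (c + 1), mul_assoc, Nat.add_right_comm, M_succ, Nat.cast_add]
  exact mul_le_mul_of_nonneg_left (by linarith [hc (r + i)]) (by positivity)

/-! ### Averaging projections -/

theorem Pavg_apply {n k : ℕ} (hk : k ∈ σ.part n) (f : ℕ → ℝ) :
    σ.Pavg f k = (∑ i ∈ σ.part n, f i) / σ.N n := by
  have h : ∃ n, k ∈ σ.part n := ⟨n, hk⟩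
  rw [Pavg, dif_pos h, σ.eq_of_mem_part h.choose_spec hk, N]

theorem Qavg_add_Pavg (f : ℕ → ℝ) : σ.Qavg f + σ.Pavg f = f := sub_add_cancel f _

theorem hasFiniteSupport_Pavg {f : ℕ → ℝ} (hf : f.HasFiniteSupport) :
    (σ.Pavg f).HasFiniteSupport := by
  refine ((σ.finite_setOf_exists_mem_part hf).biUnion fun n _ => (σ.part n).finite_toSet).subset
    fun k hk => ?_
  obtain ⟨n, hn⟩ := σ.covers k
  rw [mem_support, σ.Pavg_apply hn] at hk
  obtain ⟨i, hi, hfi⟩ := exists_ne_zero_of_sum_ne_zero (left_ne_zero_of_mul hk)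
  exact Set.mem_biUnion (x := n) ⟨i, hi, hfi⟩ hn

theorem hasFiniteSupport_Qavg {f : ℕ → ℝ} (hf : f.HasFiniteSupport) :
    (σ.Qavg f).HasFiniteSupport :=
  hf.sub (σ.hasFiniteSupport_Pavg hf)

end OrderedPartition

variable (S : SubsymmetricSpace) (σ : OrderedPartition)

theorem Pavg_apply_eq_vstar_div_Lam {n k : ℕ} (hk : k ∈ σ.part n) (f : ℕ → ℝ) :
    σ.Pavg f k = vstar S σ n f / S.Lam (σ.N n) := by
  have := S.Lam_pos (σ.N_pos n)
  rw [σ.Pavg_apply hk, vstar]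
  field_simp

theorem hasFiniteSupport_vstar {f : ℕ → ℝ} (hf : f.HasFiniteSupport) :
    (vstar S σ · f).HasFiniteSupport :=
  (σ.finite_setOf_exists_mem_part hf).subset fun _ hn =>
    exists_ne_zero_of_sum_ne_zero (right_ne_zero_of_mul hn)

theorem exists_forall_vstar_eq_zero {f : ℕ → ℝ} (hf : f.HasFiniteSupport) :
    ∃ R, ∀ n, R ≤ n → vstar S σ n f = 0 := by
  obtain ⟨R, hR⟩ := Set.Finite.bddAbove (hasFiniteSupport_vstar S σ hf)
  exact ⟨R + 1, fun n hn => by_contra fun h => (hR h).not_gt hn⟩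

theorem vstar_indicator (n : ℕ) (A : Set ℕ) (f : ℕ → ℝ) :
    vstar S σ n (A.indicator f) = S.Lam (σ.N n) / σ.N n * ∑ k ∈ σ.part n with k ∈ A, f k := by
  simp only [vstar, sum_filter, Set.indicator_apply]

theorem nrm_indicator_Pavg_le {A : Set ℕ} {f : ℕ → ℝ} {s : Finset ℕ}
    (hs : ∀ n ∉ s, ∀ k ∈ σ.part n, k ∈ A → vstar S σ n f = 0) :
    S.nrm (A.indicator (σ.Pavg f)) ≤
      ∑ n ∈ s, |vstar S σ n f / S.Lam (σ.N n)| * S.Lam #{k ∈ σ.part n | k ∈ A} := by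
  have h_sum : A.indicator (σ.Pavg f) = ∑ n ∈ s, (vstar S σ n f / S.Lam (σ.N n)) •
      Set.indicator ({k ∈ σ.part n | k ∈ A} : Finset ℕ) 1 := by
    funext k
    obtain ⟨n, hn⟩ := σ.covers k
    rw [Finset.sum_apply, sum_eq_single n (fun m _ hmn => ?_) fun h => ?_]
    · by_cases hk : k ∈ A <;> simp [hk, hn, Pavg_apply_eq_vstar_div_Lam S σ hn]
    · have hkm : k ∉ σ.part m := fun hm => hmn (σ.eq_of_mem_part hm hn)
      simp [hkm]
    · by_cases hk : k ∈ A
      · simp [hs n h k hn hk]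
      · simp [hk]
  rw [h_sum]
  refine (S.nrm_sum_le fun n _ => S.smul_mem _ (S.mem_of_hasFiniteSupport
    (hasFiniteSupport_indicator_finset _ _))).trans_eq (sum_congr rfl fun n _ => ?_)
  rw [S.nrm_smul_indicator_one]

end OrderedPartitions

section BlockEstimates

open Finset Function

theorem BioSystem.coord_sum {B : QuasiBanach X} (b : BioSystem (fun _ : X => True) B.q) (n : ℕ)
    {ι : Type*} (s : Finset ι) (F : ι → X) :
    b.coord n (∑ i ∈ s, F i) = ∑ i ∈ s, b.coord n (F i) :=
  map_sum (AddMonoidHom.mk' (b.coord n) fun f g => b.coord_add n f g trivial trivial) F s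

variable {B : QuasiBanach X} (b : QBasis B) (S : SubsymmetricSpace) (σ : OrderedPartition)

theorem Hmap_eq_sum {f : ℕ → ℝ} {s : Finset ℕ} (hs : ∀ n ∉ s, vstar S σ n f = 0) :
    Hmap B b S σ f = ∑ n ∈ s, vstar S σ n f • b.vec n :=
  finsum_eq_sum_of_support_subset _ fun n hn => by_contra fun h => hn (by simp [hs n h])

theorem coord_Hmap {f : ℕ → ℝ} (hf : f.HasFiniteSupport) (n : ℕ) :
    b.coord n (Hmap B b S σ f) = vstar S σ n f := by
  have h_fin : (support (vstar S σ · f)).Finite := hasFiniteSupport_vstar S σ hf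
  have h_coord : ∀ m, b.coord n (vstar S σ m f • b.vec m) = if n = m then vstar S σ m f else 0 :=
    fun m => by rw [b.coord_smul n _ _ trivial, b.biorth, mul_ite, mul_one, mul_zero]
  rw [Hmap_eq_sum b S σ (s := h_fin.toFinset) (by simp), b.coord_sum]
  simp [h_coord, eq_comm]

theorem nrm_Qavg_le_YNorm (f : ℕ → ℝ) : S.nrm (σ.Qavg f) ≤ YNorm B b S σ f :=
  le_add_of_nonneg_right (B.q_nonneg _)

theorem q_Hmap_le_YNorm (f : ℕ → ℝ) : B.q (Hmap B b S σ f) ≤ YNorm B b S σ f :=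
  le_add_of_nonneg_left (S.nrm_nonneg _)

theorem exists_forall_abs_vstar_le (h_semi : b.SemiNormalized) :
    ∃ C, 0 ≤ C ∧ ∀ f : ℕ → ℝ, f.HasFiniteSupport → ∀ n, |vstar S σ n f| ≤ C * YNorm B b S σ f := by
  obtain ⟨C, hC₀, hC⟩ := b.exists_forall_abs_coord_le h_semi
  refine ⟨C, hC₀, fun f hf n => ?_⟩
  rw [← coord_Hmap b S σ hf]
  exact (hC n _).trans (mul_le_mul_of_nonneg_left (q_Hmap_le_YNorm b S σ f) hC₀)

theorem exists_forall_abs_apply_le (h_semi : b.SemiNormalized) (k : ℕ) :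
    ∃ C, ∀ f : ℕ → ℝ, f.HasFiniteSupport → |f k| ≤ C * YNorm B b S σ f := by
  obtain ⟨C, -, hC⟩ := exists_forall_abs_vstar_le b S σ h_semi
  obtain ⟨n, hn⟩ := σ.covers k
  have h_one := S.Lam_pos one_pos
  have h_block := S.Lam_pos (σ.N_pos n)
  refine ⟨2 / S.Lam 1 + C / S.Lam (σ.N n), fun f hf => ?_⟩
  have h_Qavg : |σ.Qavg f k| ≤ 2 / S.Lam 1 * YNorm B b S σ f := by
    have := S.abs_sum_mul_Lam_le (σ.hasFiniteSupport_Qavg hf) {k}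
    rw [sum_singleton, card_singleton, Nat.cast_one, mul_one, ← le_div_iff₀ h_one,
      mul_div_right_comm] at this
    exact this.trans (mul_le_mul_of_nonneg_left (nrm_Qavg_le_YNorm b S σ f) (by positivity))
  have h_Pavg : |σ.Pavg f k| ≤ C / S.Lam (σ.N n) * YNorm B b S σ f := by
    rw [Pavg_apply_eq_vstar_div_Lam S σ hn, abs_div, abs_of_pos h_block, div_mul_eq_mul_div]
    exact div_le_div_of_nonneg_right (hC f hf n) h_block.le
  calc |f k| = |σ.Qavg f k + σ.Pavg f k| := by rw [← Pi.add_apply, σ.Qavg_add_Pavg]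
    _ ≤ |σ.Qavg f k| + |σ.Pavg f k| := abs_add_le _ _
    _ ≤ _ := by linarith

/-! ### Unions of initial blocks -/

theorem OrderedPartition.sum_part_indicator_Iio_M (r n : ℕ) (f : ℕ → ℝ) :
    ∑ k ∈ σ.part n, (Set.Iio (σ.M r)).indicator f k =
      if n < r then ∑ k ∈ σ.part n, f k else 0 := by
  have h_mem : ∀ k ∈ σ.part n, (k ∈ Set.Iio (σ.M r) ↔ n < r) := fun _ => σ.lt_M_iff
  split_ifs with hn
  · exact sum_congr rfl fun k hk => Set.indicator_of_mem ((h_mem k hk).2 hn) f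
  · exact sum_eq_zero fun k hk => Set.indicator_of_notMem (mt (h_mem k hk).1 hn) f

theorem OrderedPartition.Qavg_indicator_Iio_M (r : ℕ) (f : ℕ → ℝ) :
    σ.Qavg ((Set.Iio (σ.M r)).indicator f) = (Set.Iio (σ.M r)).indicator (σ.Qavg f) := by
  funext k
  obtain ⟨n, hn⟩ := σ.covers k
  have h_mem : k ∈ Set.Iio (σ.M r) ↔ n < r := σ.lt_M_iff hn
  rw [OrderedPartition.Qavg, Pi.sub_apply, σ.Pavg_apply hn, σ.sum_part_indicator_Iio_M]
  simp only [Set.indicator_apply, h_mem, OrderedPartition.Qavg, Pi.sub_apply, σ.Pavg_apply hn]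
  split_ifs <;> simp

theorem vstar_indicator_Iio_M (r n : ℕ) (f : ℕ → ℝ) :
    vstar S σ n ((Set.Iio (σ.M r)).indicator f) = if n < r then vstar S σ n f else 0 := by
  rw [vstar, σ.sum_part_indicator_Iio_M, mul_ite, mul_zero, vstar]

theorem exists_YNorm_indicator_Iio_M_le :
    ∃ D, 0 ≤ D ∧ ∀ f : ℕ → ℝ, f.HasFiniteSupport → ∀ r,
      YNorm B b S σ ((Set.Iio (σ.M r)).indicator f) ≤ D * YNorm B b S σ f := by
  obtain ⟨C, hC₀, hC⟩ := b.exists_forall_q_proj_range_le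
  refine ⟨1 + C, by positivity, fun f hf r => ?_⟩
  have h_Hmap : Hmap B b S σ ((Set.Iio (σ.M r)).indicator f) =
      b.proj (range r) (Hmap B b S σ f) := by
    rw [Hmap_eq_sum b S σ (s := range r) fun n hn => by
      rw [vstar_indicator_Iio_M, if_neg (by simpa using hn)]]
    exact sum_congr rfl fun n hn => by
      rw [vstar_indicator_Iio_M, if_pos (mem_range.1 hn), coord_Hmap b S σ hf]
  calc YNorm B b S σ ((Set.Iio (σ.M r)).indicator f)
      = S.nrm ((Set.Iio (σ.M r)).indicator (σ.Qavg f)) +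
          B.q (b.proj (range r) (Hmap B b S σ f)) := by
        rw [YNorm, σ.Qavg_indicator_Iio_M, h_Hmap]
    _ ≤ S.nrm (σ.Qavg f) + C * B.q (Hmap B b S σ f) :=
        add_le_add (S.nrm_indicator_le (σ.hasFiniteSupport_Qavg hf) _) (hC r _)
    _ ≤ YNorm B b S σ f + C * YNorm B b S σ f :=
        add_le_add (nrm_Qavg_le_YNorm b S σ f)
          (mul_le_mul_of_nonneg_left (q_Hmap_le_YNorm b S σ f) hC₀)
    _ = (1 + C) * YNorm B b S σ f := by ring

/-! ### Sets with small traces on the blocks -/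

theorem SubsymmetricSpace.Negligible.Lam_mul_abs_sum_le {S : SubsymmetricSpace} {δ : ℝ} {N : ℕ}
    {A : Finset ℕ} (h : S.Negligible δ #A N) {f : ℕ → ℝ} (hf : f.HasFiniteSupport) :
    S.Lam N * |∑ k ∈ A, f k| ≤ δ * N * (2 * S.nrm f) := by
  rcases A.eq_empty_or_nonempty with rfl | hA
  · rw [sum_empty, abs_zero, mul_zero]
    have h_nonneg : 0 ≤ δ * N := by simpa using h.le
    have := S.nrm_nonneg f
    positivity
  · have h_pos := S.Lam_pos hA.card_pos
    refine le_of_mul_le_mul_right ?_ h_pos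
    calc S.Lam N * |∑ k ∈ A, f k| * S.Lam #A = S.Lam N * (|∑ k ∈ A, f k| * S.Lam #A) := by ring
      _ ≤ S.Lam N * (2 * #A * S.nrm f) :=
        mul_le_mul_of_nonneg_left (S.abs_sum_mul_Lam_le hf A) (S.Lam_nonneg N)
      _ = #A * S.Lam N * (2 * S.nrm f) := by ring
      _ ≤ δ * (N * S.Lam #A) * (2 * S.nrm f) :=
        mul_le_mul_of_nonneg_right h.mul_Lam_le (mul_nonneg two_pos.le (S.nrm_nonneg f))
      _ = δ * N * (2 * S.nrm f) * S.Lam #A := by ring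

theorem abs_vstar_indicator_le {δ : ℝ} {n : ℕ} {A : Set ℕ}
    (h : S.Negligible δ #{k ∈ σ.part n | k ∈ A} (σ.N n)) {f : ℕ → ℝ} (hf : f.HasFiniteSupport) :
    |vstar S σ n (A.indicator f)| ≤ δ * (2 * S.nrm (σ.Qavg f) + |vstar S σ n f|) := by
  set D := {k ∈ σ.part n | k ∈ A}
  have hΛ := S.Lam_pos (σ.N_pos n)
  have hN : (0 : ℝ) < σ.N n := Nat.cast_pos.2 (σ.N_pos n)
  have h_sum : ∑ k ∈ D, f k = ∑ k ∈ D, σ.Qavg f k + #D * (vstar S σ n f / S.Lam (σ.N n)) := by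
    rw [← nsmul_eq_mul, ← sum_const, ← sum_add_distrib]
    refine sum_congr rfl fun k hk => ?_
    rw [← Pavg_apply_eq_vstar_div_Lam S σ (mem_filter.1 hk).1, ← Pi.add_apply, σ.Qavg_add_Pavg]
  have h_const : S.Lam (σ.N n) * |#D * (vstar S σ n f / S.Lam (σ.N n))| ≤
      δ * σ.N n * |vstar S σ n f| := by
    rw [abs_mul, Nat.abs_cast, abs_div, abs_of_pos hΛ, mul_left_comm, mul_div_cancel₀ _ hΛ.ne']
    exact mul_le_mul_of_nonneg_right h.le (abs_nonneg _)
  rw [vstar_indicator, abs_mul, abs_of_pos (div_pos hΛ hN), div_mul_eq_mul_div, div_le_iff₀ hN]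
  calc S.Lam (σ.N n) * |∑ k ∈ D, f k|
      ≤ S.Lam (σ.N n) * |∑ k ∈ D, σ.Qavg f k| +
          S.Lam (σ.N n) * |#D * (vstar S σ n f / S.Lam (σ.N n))| := by
        rw [h_sum, ← mul_add]
        exact mul_le_mul_of_nonneg_left (abs_add_le _ _) hΛ.le
    _ ≤ δ * σ.N n * (2 * S.nrm (σ.Qavg f)) + δ * σ.N n * |vstar S σ n f| :=
        add_le_add (h.Lam_mul_abs_sum_le (σ.hasFiniteSupport_Qavg hf)) h_const
    _ = δ * (2 * S.nrm (σ.Qavg f) + |vstar S σ n f|) * σ.N n := by ring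

/-- The tail condition under which the restriction to `A` is bounded: `A` avoids the first `r`
blocks, and its traces on the blocks `r, r + 1, …` are negligible at a geometric rate. -/
structure NegligibleTail (S : SubsymmetricSpace) (σ : OrderedPartition) (E η : ℝ) (r : ℕ)
    (A : Set ℕ) : Prop where
  M_le : ∀ k ∈ A, σ.M r ≤ k
  negligible : ∀ i, S.Negligible (E * η ^ i) #{k ∈ σ.part (r + i) | k ∈ A} (σ.N (r + i))

theorem sum_Ico_le_of_geometric {a η : ℝ} (ha : 0 ≤ a) (hη₀ : 0 ≤ η) (hη₁ : η < 1) {r : ℕ}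
    {w : ℕ → ℝ} (hw : ∀ i, w (r + i) ≤ a * η ^ i) (R : ℕ) :
    ∑ n ∈ Ico r R, w n ≤ a / (1 - η) := by
  rw [sum_Ico_eq_sum_range, div_eq_mul_inv, ← tsum_geometric_of_lt_one hη₀ hη₁]
  refine (sum_le_sum fun i _ => hw i).trans ?_
  rw [← mul_sum]
  exact mul_le_mul_of_nonneg_left
    ((summable_geometric_of_lt_one hη₀ hη₁).sum_le_tsum _ fun i _ => pow_nonneg hη₀ i) ha

namespace NegligibleTail

variable {S σ} {E η : ℝ} {r : ℕ} {A : Set ℕ} (h : NegligibleTail S σ E η r A)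
include h

theorem notMem_of_mem_part {n k : ℕ} (hn : n < r) (hk : k ∈ σ.part n) : k ∉ A := fun hkA =>
  (h.M_le k hkA).not_gt ((σ.lt_M_iff hk).2 hn)

theorem nonneg : 0 ≤ E := by
  have h_Lam := (S.Lam_nonneg _).trans (h.negligible 0).Lam_le
  rw [pow_zero, mul_one] at h_Lam
  exact nonneg_of_mul_nonneg_left h_Lam (S.Lam_pos (σ.N_pos _))

theorem vstar_indicator_eq_zero {n : ℕ} (hn : n < r) (f : ℕ → ℝ) :
    vstar S σ n (A.indicator f) = 0 := by
  rw [vstar_indicator, filter_false_of_mem fun k hk => h.notMem_of_mem_part hn hk, sum_empty,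
    mul_zero]

variable {f : ℕ → ℝ} (hf : f.HasFiniteSupport) {a : ℝ}
include hf

theorem abs_vstar_indicator_le (hη : 0 ≤ η) (hQ : S.nrm (σ.Qavg f) ≤ a)
    (hv : ∀ n, |vstar S σ n f| ≤ a) (i : ℕ) :
    |vstar S σ (r + i) (A.indicator f)| ≤ 3 * E * a * η ^ i := by
  have hE := h.nonneg
  calc |vstar S σ (r + i) (A.indicator f)|
      ≤ E * η ^ i * (2 * S.nrm (σ.Qavg f) + |vstar S σ (r + i) f|) :=
        AGpaper.abs_vstar_indicator_le S σ (h.negligible i) hf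
    _ ≤ E * η ^ i * (2 * a + a) := by gcongr; exact hv _
    _ = 3 * E * a * η ^ i := by ring

theorem nrm_indicator_Pavg_le (hη₀ : 0 ≤ η) (hη₁ : η < 1) (hv : ∀ n, |vstar S σ n f| ≤ a) :
    S.nrm (A.indicator (σ.Pavg f)) ≤ E * a / (1 - η) := by
  have ha : 0 ≤ a := (abs_nonneg _).trans (hv 0)
  obtain ⟨R, hR⟩ := exists_forall_vstar_eq_zero S σ hf
  refine (AGpaper.nrm_indicator_Pavg_le S σ (s := Ico r R) fun n hn k hk hkA => ?_).trans
    (sum_Ico_le_of_geometric (mul_nonneg h.nonneg ha) hη₀ hη₁ (fun i => ?_) R)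
  · have hrn : r ≤ n := not_lt.1 fun hn' => h.notMem_of_mem_part hn' hk hkA
    exact hR n (not_lt.1 fun hn' => hn (mem_Ico.2 ⟨hrn, hn'⟩))
  · have hΛ := S.Lam_pos (σ.N_pos (r + i))
    rw [abs_div, abs_of_pos hΛ, div_mul_eq_mul_div, div_le_iff₀ hΛ]
    calc |vstar S σ (r + i) f| * S.Lam #{k ∈ σ.part (r + i) | k ∈ A}
        ≤ a * (E * η ^ i * S.Lam (σ.N (r + i))) :=
          mul_le_mul (hv _) (h.negligible i).Lam_le (S.Lam_nonneg _) ha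
      _ = E * a * η ^ i * S.Lam (σ.N (r + i)) := by ring

theorem nrm_Pavg_indicator_le (hη₀ : 0 ≤ η) (hη₁ : η < 1) (hQ : S.nrm (σ.Qavg f) ≤ a)
    (hv : ∀ n, |vstar S σ n f| ≤ a) :
    S.nrm (σ.Pavg (A.indicator f)) ≤ 3 * E * a / (1 - η) := by
  have hE := h.nonneg
  have ha : 0 ≤ a := (abs_nonneg _).trans (hv 0)
  obtain ⟨R, hR⟩ := exists_forall_vstar_eq_zero S σ (hasFiniteSupport_indicator hf A)
  have h_sum := AGpaper.nrm_indicator_Pavg_le S σ (A := Set.univ) (f := A.indicator f)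
    (s := Ico r R) fun n hn _ _ _ => (lt_or_ge n r).elim (h.vstar_indicator_eq_zero · f)
      fun hrn => hR n (not_lt.1 fun hn' => hn (mem_Ico.2 ⟨hrn, hn'⟩))
  rw [Set.indicator_univ] at h_sum
  refine h_sum.trans (sum_Ico_le_of_geometric (by positivity) hη₀ hη₁ (fun i => ?_) R)
  have hΛ := S.Lam_pos (σ.N_pos (r + i))
  simp only [Set.mem_univ, filter_true]
  rw [abs_div, abs_of_pos hΛ, ← OrderedPartition.N, div_mul_cancel₀ _ hΛ.ne']
  exact h.abs_vstar_indicator_le hf hη₀ hQ hv i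

theorem nrm_Qavg_indicator_le (hη₀ : 0 ≤ η) (hη₁ : η < 1) (hQ : S.nrm (σ.Qavg f) ≤ a)
    (hv : ∀ n, |vstar S σ n f| ≤ a) :
    S.nrm (σ.Qavg (A.indicator f)) ≤ a + E * a / (1 - η) + 3 * E * a / (1 - η) := by
  have h_split : σ.Qavg (A.indicator f) =
      A.indicator (σ.Qavg f) + A.indicator (σ.Pavg f) - σ.Pavg (A.indicator f) := by
    rw [← Set.indicator_add', σ.Qavg_add_Pavg, OrderedPartition.Qavg]
  have hQ_fin := σ.hasFiniteSupport_Qavg hf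
  have hAQ_fin := hasFiniteSupport_indicator hQ_fin A
  have hAP_fin := hasFiniteSupport_indicator (σ.hasFiniteSupport_Pavg hf) A
  rw [h_split]
  refine (S.nrm_sub_le (hAQ_fin.add hAP_fin)
    (σ.hasFiniteSupport_Pavg (hasFiniteSupport_indicator hf A))).trans (add_le_add ?_ ?_)
  · exact (S.nrm_add_le hAQ_fin hAP_fin).trans
      (add_le_add ((S.nrm_indicator_le hQ_fin A).trans hQ)
        (h.nrm_indicator_Pavg_le hf hη₀ hη₁ hv))
  · exact h.nrm_Pavg_indicator_le hf hη₀ hη₁ hQ hv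

end NegligibleTail

theorem exists_q_Hmap_indicator_le (h_semi : b.SemiNormalized) {E η : ℝ} (hη₀ : 0 ≤ η)
    (hη₁ : η < 1) :
    ∃ K, 0 ≤ K ∧ ∀ {r A}, NegligibleTail S σ E η r A → ∀ {f : ℕ → ℝ}, f.HasFiniteSupport →
      ∀ {a}, S.nrm (σ.Qavg f) ≤ a → (∀ n, |vstar S σ n f| ≤ a) →
        B.q (Hmap B b S σ (A.indicator f)) ≤ K * a := by
  obtain ⟨_, C, _, h_vec⟩ := h_semi
  obtain ⟨K, hK₀, hK⟩ := B.exists_q_sum_Ico_le_of_geometric hη₀ hη₁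
  have hC : 0 ≤ C := (B.q_nonneg _).trans (h_vec 0).2
  refine ⟨K * (3 * |E| * C), by positivity, fun {r A} h {f} hf {a} hQ hv => ?_⟩
  obtain ⟨R, hR⟩ := exists_forall_vstar_eq_zero S σ (hasFiniteSupport_indicator hf A)
  rw [Hmap_eq_sum b S σ (s := Ico r R) fun n hn => (lt_or_ge n r).elim
      (h.vstar_indicator_eq_zero · f)
      fun hrn => hR n (not_lt.1 fun hn' => hn (mem_Ico.2 ⟨hrn, hn'⟩)),
    mul_assoc, abs_of_nonneg h.nonneg]
  refine hK _ r _ (fun i => ?_) R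
  have hv_small := h.abs_vstar_indicator_le hf hη₀ hQ hv i
  calc B.q (vstar S σ (r + i) (A.indicator f) • b.vec (r + i))
      = |vstar S σ (r + i) (A.indicator f)| * B.q (b.vec (r + i)) := B.q_smul _ _
    _ ≤ 3 * E * a * η ^ i * C :=
      mul_le_mul hv_small (h_vec _).2 (B.q_nonneg _) ((abs_nonneg _).trans hv_small)
    _ = 3 * E * C * a * η ^ i := by ring

theorem exists_YNorm_indicator_le (h_semi : b.SemiNormalized) {E η : ℝ} (hη₀ : 0 ≤ η)
    (hη₁ : η < 1) :
    ∃ D, 0 ≤ D ∧ ∀ {r A}, NegligibleTail S σ E η r A → ∀ {f : ℕ → ℝ}, f.HasFiniteSupport →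
      YNorm B b S σ (A.indicator f) ≤ D * YNorm B b S σ f := by
  obtain ⟨C, hC₀, hC⟩ := exists_forall_abs_vstar_le b S σ h_semi
  obtain ⟨K, hK₀, hK⟩ := exists_q_Hmap_indicator_le b S σ h_semi (E := E) hη₀ hη₁
  have := sub_pos.2 hη₁
  refine ⟨(1 + |E| / (1 - η) + 3 * |E| / (1 - η) + K) * (1 + C), by positivity,
    fun {r A} h {f} hf => ?_⟩
  have hY : 0 ≤ YNorm B b S σ f := add_nonneg (S.nrm_nonneg _) (B.q_nonneg _)
  have hCY : 0 ≤ C * YNorm B b S σ f := mul_nonneg hC₀ hY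
  have hQ : S.nrm (σ.Qavg f) ≤ (1 + C) * YNorm B b S σ f := by
    linarith [nrm_Qavg_le_YNorm b S σ f]
  have hv : ∀ n, |vstar S σ n f| ≤ (1 + C) * YNorm B b S σ f := fun n => by
    linarith [hC f hf n]
  rw [abs_of_nonneg h.nonneg]
  exact (add_le_add (h.nrm_Qavg_indicator_le hf hη₀ hη₁ hQ hv) (hK h hf hQ hv)).trans_eq (by ring)

variable {S σ}

theorem exists_negligibleTail (hLRP : LRP S.Lam) (hURP : URP S.Lam)
    (hMN : ∃ c : ℝ, ∀ r, (σ.M r : ℝ) ≤ c * σ.N r) :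
    ∃ E η : ℝ, 0 ≤ η ∧ η < 1 ∧ ∀ r (A : Finset ℕ), (∀ k ∈ A, σ.M r ≤ k) → #A ≤ σ.M (r + 1) →
      NegligibleTail S σ E η r A := by
  obtain ⟨θ, K, hθ₀, hθ₁, hK, h_geometric⟩ := σ.exists_M_succ_le_geometric hMN
  obtain ⟨E, η, -, hη₀, hη₁, h_negligible⟩ :=
    SubsymmetricSpace.exists_negligible hLRP hURP hθ₀ hθ₁ hK
  refine ⟨E, η, hη₀, hη₁, fun r A hA h_card => ⟨hA, fun i => ?_⟩⟩
  refine h_negligible i _ _ (card_le_card fun k hk => ?_)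
    ((Nat.cast_le.2 ((card_le_card fun k hk => ?_).trans h_card)).trans (h_geometric r i))
  · simp_all
  · simp_all

theorem exists_YNorm_indicator_finset_le (h_semi : b.SemiNormalized) (hLRP : LRP S.Lam)
    (hURP : URP S.Lam) (hMN : ∃ c : ℝ, ∀ r, (σ.M r : ℝ) ≤ c * σ.N r) :
    ∃ D, 0 ≤ D ∧ ∀ r (A : Finset ℕ), (∀ k ∈ A, σ.M r ≤ k) → #A ≤ σ.M (r + 1) →
      ∀ f : ℕ → ℝ, f.HasFiniteSupport →
        YNorm B b S σ (Set.indicator A f) ≤ D * YNorm B b S σ f := by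
  obtain ⟨E, η, hη₀, hη₁, h_tail⟩ := exists_negligibleTail hLRP hURP hMN
  obtain ⟨D, hD₀, hD⟩ := exists_YNorm_indicator_le b S σ h_semi (E := E) hη₀ hη₁
  exact ⟨D, hD₀, fun r A hA h_card f hf => hD (h_tail r A hA h_card) hf⟩

theorem exists_YNorm_indicator_le_of_card_lt (h_semi : b.SemiNormalized) (hLRP : LRP S.Lam)
    (hURP : URP S.Lam) (hMN : ∃ c : ℝ, ∀ r, (σ.M r : ℝ) ≤ c * σ.N r) :
    ∃ D, 0 ≤ D ∧ ∀ A : Finset ℕ, (∀ n ∈ A, #A < n) → ∀ f : ℕ → ℝ, f.HasFiniteSupport →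
      YNorm B b S σ (Set.indicator A f) ≤ D * YNorm B b S σ f := by
  obtain ⟨D, hD₀, hD⟩ := exists_YNorm_indicator_finset_le b h_semi hLRP hURP hMN
  refine ⟨D, hD₀, fun A hA f hf => ?_⟩
  rcases A.eq_empty_or_nonempty with rfl | h_nonempty
  · exact hD 0 ∅ (by simp) (by simp) f hf
  · obtain ⟨r, hr, hr'⟩ := σ.exists_M_le_and_lt_M_succ (A.min' h_nonempty)
    exact hD r A (fun k hk => hr.trans (A.min'_le k hk))
      ((hA _ (A.min'_mem h_nonempty)).trans hr').le f hf

end BlockEstimates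

section Completions

open Finset

theorem le_of_forall_pos_le_add_mul {x y C : ℝ} (h : ∀ ε > 0, x ≤ y + C * ε) : x ≤ y := by
  have h_lim : Filter.Tendsto (fun ε => y + C * ε) (nhdsWithin 0 (Set.Ioi 0)) (nhds (y + C * 0)) :=
    tendsto_nhdsWithin_of_tendsto_nhds (Continuous.tendsto (by fun_prop) 0)
  rw [mul_zero, add_zero] at h_lim
  exact ge_of_tendsto h_lim (Filter.eventually_of_mem self_mem_nhdsWithin h)

namespace QuasiBanach

variable (B : QuasiBanach X) {V : Type*} [AddCommGroup V] [Module ℝ V] {j : V →ₗ[ℝ] X}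
  {l : V →ₗ[ℝ] ℝ}

/-- The intervals with centres `l f` and radii `C κ q (x - j f)` meet pairwise, hence all of them
have a common point. -/
theorem exists_forall_abs_sub_le {C : ℝ} (hC : 0 ≤ C) (hl : ∀ f, |l f| ≤ C * B.q (j f)) (x : X) :
    ∃ a, ∀ f, |a - l f| ≤ C * B.kappa * B.q (x - j f) := by
  set c : V → ℝ := fun f => C * B.kappa * B.q (x - j f)
  have h_meet : ∀ f g, l f - c f ≤ l g + c g := fun f g => by
    have h_mid := B.q_sub_le_of_mid (j f) x (j g)
    rw [B.q_sub_comm (j f) x] at h_mid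
    have h_diff : l f - l g ≤ C * B.q (j f - j g) := by
      simpa using (le_abs_self _).trans (hl (f - g))
    linarith [mul_le_mul_of_nonneg_left h_mid hC]
  obtain ⟨a, ha⟩ := exists_between_of_forall_le (s := Set.range fun f => l f - c f)
    (t := Set.range fun f => l f + c f) (Set.range_nonempty _) (Set.range_nonempty _)
    (by rintro _ ⟨f, rfl⟩ _ ⟨g, rfl⟩; exact h_meet f g)
  refine ⟨a, fun f => abs_sub_le_iff.2 ⟨?_, ?_⟩⟩
  · linarith [ha.2 ⟨f, rfl⟩]
  · linarith [ha.1 ⟨f, rfl⟩]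

theorem eq_of_forall_abs_sub_le {x : X} {a a' M K K' : ℝ} (hM : 0 ≤ M)
    (h : ∀ f, |a - l f| ≤ M * B.q (x - j f))
    (h_approx : ∀ ε > 0, ∃ f, B.q (x - j f) ≤ K * ε ∧ |a' - l f| ≤ K' * ε) : a = a' := by
  refine sub_eq_zero.1 (abs_nonpos_iff.1 (le_of_forall_pos_le_add_mul (C := M * K + K')
    fun ε hε => ?_))
  obtain ⟨f, hx, ha'⟩ := h_approx ε hε
  calc |a - a'| ≤ |a - l f| + |a' - l f| := by
        rw [abs_sub_comm a' (l f)]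
        exact abs_sub_le _ _ _
    _ ≤ M * (K * ε) + K' * ε := add_le_add ((h f).trans (mul_le_mul_of_nonneg_left hx hM)) ha'
    _ = 0 + (M * K + K') * ε := by ring

theorem exists_linearMap_extension (h_dense : ∀ x, ∀ ε > 0, ∃ f, B.q (x - j f) < ε) {C : ℝ}
    (hC : 0 ≤ C) (hl : ∀ f, |l f| ≤ C * B.q (j f)) :
    ∃ L : X →ₗ[ℝ] ℝ, (∀ x, |L x| ≤ C * B.kappa * B.q x) ∧ ∀ f, L (j f) = l f := by
  choose L hL using B.exists_forall_abs_sub_le hC hl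
  have hM : 0 ≤ C * B.kappa := mul_nonneg hC B.kappa_nonneg
  have hL_approx : ∀ {x f ε}, B.q (x - j f) < ε → |L x - l f| ≤ C * B.kappa * ε := fun h =>
    (hL _ _).trans (mul_le_mul_of_nonneg_left h.le hM)
  refine ⟨⟨⟨L, fun x y => B.eq_of_forall_abs_sub_le (K := 2 * B.kappa)
    (K' := 2 * (C * B.kappa)) hM (hL _) fun ε hε => ?_⟩, fun a x =>
    B.eq_of_forall_abs_sub_le (K := |a|) (K' := |a| * (C * B.kappa)) hM (hL _) fun ε hε => ?_⟩,
    fun x => by simpa using hL x 0,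
    fun f => B.eq_of_forall_abs_sub_le (K := 0) (K' := 0) hM (hL _) fun ε _ => ⟨f, ?_⟩⟩
  · obtain ⟨f, hf⟩ := h_dense x ε hε
    obtain ⟨g, hg⟩ := h_dense y ε hε
    refine ⟨f + g, ?_, ?_⟩
    · rw [map_add, add_sub_add_comm]
      refine (B.q_triangle _ _).trans ?_
      rw [mul_comm 2, mul_assoc, two_mul]
      exact mul_le_mul_of_nonneg_left (add_le_add hf.le hg.le) B.kappa_nonneg
    · rw [map_add, add_sub_add_comm, mul_assoc, two_mul]
      exact (abs_add_le _ _).trans (add_le_add (hL_approx hf) (hL_approx hg))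
  · obtain ⟨f, hf⟩ := h_dense x ε hε
    refine ⟨a • f, ?_, ?_⟩
    · rw [map_smul, ← smul_sub, B.q_smul]
      exact mul_le_mul_of_nonneg_left hf.le (abs_nonneg a)
    · rw [map_smul, RingHom.id_apply, ← smul_sub, smul_eq_mul, abs_mul, mul_assoc]
      exact mul_le_mul_of_nonneg_left (hL_approx hf) (abs_nonneg a)
  · simp [B.q_zero]

end QuasiBanach

variable {B : QuasiBanach X} {j : (ℕ →₀ ℝ) →ₗ[ℝ] X}

theorem exists_bioSystem_of_dense (h_dense : ∀ x, ∀ ε > 0, ∃ f, B.q (x - j f) < ε)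
    (h_coord : ∀ n, ∃ C, ∀ f : ℕ →₀ ℝ, |f n| ≤ C * B.q (j f)) :
    ∃ b : BioSystem (fun _ : X => True) B.q, (∀ n, b.vec n = j (Finsupp.single n 1)) ∧
      ∀ n f, b.coord n (j f) = f n := by
  have h_ext : ∀ n, ∃ L : X →ₗ[ℝ] ℝ, (∃ C, ∀ x, |L x| ≤ C * B.q x) ∧ ∀ f, L (j f) = f n :=
    fun n => by
      obtain ⟨C, hC⟩ := h_coord n
      obtain ⟨L, hL, hLj⟩ := B.exists_linearMap_extension (l := Finsupp.lapply n) h_dense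
        (abs_nonneg C) fun f =>
          (hC f).trans (mul_le_mul_of_nonneg_right (le_abs_self C) (B.q_nonneg _))
      exact ⟨L, ⟨_, hL⟩, hLj⟩
  choose L hL hLj using h_ext
  exact ⟨{
    vec := fun n => j (Finsupp.single n 1)
    vec_mem := fun _ => trivial
    coord := fun n => L n
    coord_add := fun n f g _ _ => map_add (L n) f g
    coord_smul := fun n a f _ => map_smul (L n) a f
    coord_bdd := fun n => (hL n).imp fun _ hC f _ => hC f
    biorth := fun m n => by rw [hLj, Finsupp.single_apply]; simp only [eq_comm] },
    fun _ => rfl, hLj⟩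

namespace BioSystem

variable {b : BioSystem (fun _ : X => True) B.q} (h_vec : ∀ n, b.vec n = j (Finsupp.single n 1))
  (h_coord : ∀ n f, b.coord n (j f) = f n)
include h_vec h_coord

theorem proj_map (A : Finset ℕ) (f : ℕ →₀ ℝ) : b.proj A (j f) = j (f.filter (· ∈ A)) := by
  have h_filter : f.filter (· ∈ A) = ∑ n ∈ A, Finsupp.single n (f n) := by
    ext k
    simp [Finsupp.filter_apply, Finsupp.finsetSum_apply, Finsupp.single_apply]
  rw [proj, h_filter, map_sum]
  refine sum_congr rfl fun n _ => ?_
  rw [h_coord, h_vec, ← map_smul, Finsupp.smul_single, smul_eq_mul, mul_one]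

variable (h_dense : ∀ x, ∀ ε > 0, ∃ f, B.q (x - j f) < ε)
include h_dense

theorem q_proj_le_of_dense {A : Finset ℕ} {D : ℝ} (hD : 0 ≤ D)
    (h : ∀ f : ℕ →₀ ℝ, B.q (j (f.filter (· ∈ A))) ≤ D * B.q (j f)) (x : X) :
    B.q (b.proj A x) ≤ B.kappa ^ 2 * D * B.q x := by
  obtain ⟨C, hC⟩ := b.exists_q_proj_le A
  have hκ := B.kappa_nonneg
  refine le_of_forall_pos_le_add_mul (C := B.kappa * |C| + B.kappa ^ 2 * D) fun ε hε => ?_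
  obtain ⟨f, hf⟩ := h_dense x ε hε
  have h_near : B.q (b.proj A (x - j f)) ≤ |C| * ε :=
    (hC _).trans (mul_le_mul (le_abs_self C) hf.le (B.q_nonneg _) (abs_nonneg C))
  have h_f : B.q (j f) ≤ B.kappa * (B.q x + ε) := by
    have := B.q_sub_le x (x - j f)
    rw [sub_sub_cancel] at this
    exact this.trans (mul_le_mul_of_nonneg_left (add_le_add_right hf.le _) hκ)
  calc B.q (b.proj A x) = B.q (b.proj A (x - j f) + b.proj A (j f)) := by
        rw [← b.proj_add A trivial trivial, sub_add_cancel]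
    _ ≤ B.kappa * (B.q (b.proj A (x - j f)) + B.q (b.proj A (j f))) := B.q_triangle _ _
    _ ≤ B.kappa * (|C| * ε + D * (B.kappa * (B.q x + ε))) := by
        rw [proj_map h_vec h_coord]
        gcongr
        exact (h f).trans (mul_le_mul_of_nonneg_left h_f hD)
    _ = B.kappa ^ 2 * D * B.q x + (B.kappa * |C| + B.kappa ^ 2 * D) * ε := by ring

theorem qTendsto_proj_range_of_dense {C : ℝ} (hC₀ : 0 ≤ C)
    (hC : ∀ m x, B.q (b.proj (range m) x) ≤ C * B.q x) (x : X) :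
    QTendsto B.q (fun m => b.proj (range m) x) x := by
  intro ε hε
  have hκ := B.one_le_kappa
  obtain ⟨f, hf⟩ := h_dense x (ε / (B.kappa * (C + 1))) (by positivity)
  obtain ⟨m₀, hm₀⟩ := f.support.exists_nat_subset_range
  refine ⟨m₀, fun m hm => ?_⟩
  have h_fixed : b.proj (range m) (j f) = j f := by
    rw [proj_map h_vec h_coord, (Finsupp.filter_eq_self_iff _ f).2]
    exact fun n hn => range_mono hm (hm₀ (Finsupp.mem_support_iff.2 hn))
  have h_error : b.proj (range m) x - x = b.proj (range m) (x - j f) - (x - j f) := by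
    conv_lhs => rw [← sub_add_cancel x (j f), b.proj_add _ trivial trivial, h_fixed]
    abel
  calc B.q (b.proj (range m) x - x)
      ≤ B.kappa * (B.q (b.proj (range m) (x - j f)) + B.q (x - j f)) := by
        rw [h_error]
        exact B.q_sub_le _ _
    _ ≤ B.kappa * (C * B.q (x - j f) + B.q (x - j f)) :=
        mul_le_mul_of_nonneg_left (add_le_add_left (hC _ _) _) B.kappa_nonneg
    _ = B.kappa * (C + 1) * B.q (x - j f) := by ring
    _ < ε := by rwa [← lt_div_iff₀' (by positivity)]

end BioSystem

theorem exists_qBasis_of_dense (h_dense : ∀ x, ∀ ε > 0, ∃ f, B.q (x - j f) < ε)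
    (h_coord : ∀ n, ∃ C, ∀ f : ℕ →₀ ℝ, |f n| ≤ C * B.q (j f))
    (h_partial : ∃ D, 0 ≤ D ∧ ∀ m, ∀ f : ℕ →₀ ℝ,
      B.q (j (f.filter (· ∈ range m))) ≤ D * B.q (j f)) :
    ∃ b : QBasis B, (∀ n, b.vec n = j (Finsupp.single n 1)) ∧ ∀ n f, b.coord n (j f) = f n := by
  obtain ⟨b, h_vec, h_coord_map⟩ := exists_bioSystem_of_dense h_dense h_coord
  obtain ⟨D, hD₀, hD⟩ := h_partial
  refine ⟨⟨b, fun x _ => b.qTendsto_proj_range_of_dense h_vec h_coord_map h_dense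
    (C := B.kappa ^ 2 * D) (by have := B.kappa_nonneg; positivity) (fun m =>
      b.q_proj_le_of_dense h_vec h_coord_map h_dense hD₀ (hD m)) x⟩, h_vec, h_coord_map⟩

end Completions

open Finset in
theorem exists_q_map_filter_range_le {B : QuasiBanach X} (b : QBasis B)
    (h_semi : b.SemiNormalized) {S : SubsymmetricSpace} {σ : OrderedPartition}
    (hLRP : LRP S.Lam) (hURP : URP S.Lam) (hMN : ∃ c : ℝ, ∀ r, (σ.M r : ℝ) ≤ c * σ.N r)
    {Y : Type*} [AddCommGroup Y] [Module ℝ Y] (BY : QuasiBanach Y) (j : (ℕ →₀ ℝ) →ₗ[ℝ] Y)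
    (h_iso : ∀ f : ℕ →₀ ℝ, BY.q (j f) = YNorm B b S σ f) :
    ∃ D, 0 ≤ D ∧ ∀ m, ∀ f : ℕ →₀ ℝ, BY.q (j (f.filter (· ∈ range m))) ≤ D * BY.q (j f) := by
  obtain ⟨D, hD₀, hD⟩ := exists_YNorm_indicator_Iio_M_le b S σ
  obtain ⟨D', hD'₀, hD'⟩ := exists_YNorm_indicator_finset_le b h_semi hLRP hURP hMN
  have hκ := BY.kappa_nonneg
  refine ⟨BY.kappa * (D + D'), by positivity, fun m f => ?_⟩
  obtain ⟨r, hr, hr'⟩ := σ.exists_M_le_and_lt_M_succ m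
  have h_split : f.filter (· ∈ range m) =
      f.filter (· ∈ Set.Iio (σ.M r)) + f.filter (· ∈ (Ico (σ.M r) m : Set ℕ)) := by
    ext k
    simp only [Finsupp.add_apply, Finsupp.filter_apply, mem_range, Set.mem_Iio, coe_Ico,
      Set.mem_Ico]
    grind
  have h_initial : BY.q (j (f.filter (· ∈ Set.Iio (σ.M r)))) ≤ D * BY.q (j f) := by
    rw [h_iso, h_iso, Finsupp.filter_eq_indicator]
    exact hD f f.hasFiniteSupport r
  have h_rest : BY.q (j (f.filter (· ∈ (Ico (σ.M r) m : Set ℕ)))) ≤ D' * BY.q (j f) := by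
    rw [h_iso, h_iso, Finsupp.filter_eq_indicator]
    exact hD' r (Ico (σ.M r) m) (fun k hk => (mem_Ico.1 hk).1)
      (by rw [Nat.card_Ico]; omega) f f.hasFiniteSupport
  rw [h_split, map_add]
  calc BY.q (j (f.filter (· ∈ Set.Iio (σ.M r))) + j (f.filter (· ∈ (Ico (σ.M r) m : Set ℕ))))
      ≤ BY.kappa * (D * BY.q (j f) + D' * BY.q (j f)) :=
        (BY.q_triangle _ _).trans (mul_le_mul_of_nonneg_left (add_le_add h_initial h_rest) hκ)
    _ = BY.kappa * (D + D') * BY.q (j f) := by ring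

theorem statement6 {X : Type*} [AddCommGroup X] [Module ℝ X] (B : QuasiBanach X)
    (bX : QBasis B) (hsemi : bX.toBioSystem.SemiNormalized)
    (S : SubsymmetricSpace) (σ : OrderedPartition)
    (hLRP : LRP S.Lam) (hURP : URP S.Lam)
    (hMN : ∃ c : ℝ, ∀ r : ℕ, (σ.M r : ℝ) ≤ c * (σ.N r : ℝ))
    {Y : Type*} [AddCommGroup Y] [Module ℝ Y] (BY : QuasiBanach Y)
    (j : (ℕ →₀ ℝ) →ₗ[ℝ] Y)
    (hiso : ∀ f : ℕ →₀ ℝ, BY.q (j f) = YNorm B bX S σ ⇑f)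
    (hdense : ∀ y : Y, ∀ ε : ℝ, 0 < ε → ∃ f : ℕ →₀ ℝ, BY.q (y - j f) < ε) :
    ∃ bY : QBasis BY, (∀ n : ℕ, bY.vec n = j (Finsupp.single n 1)) ∧
      bY.toBioSystem.ASU := by
  obtain ⟨bY, h_vec, h_coord⟩ := exists_qBasis_of_dense hdense
    (fun n => (exists_forall_abs_apply_le bX S σ hsemi n).imp fun C hC f => by
      rw [hiso]
      exact hC f f.hasFiniteSupport)
    (exists_q_map_filter_range_le bX hsemi hLRP hURP hMN BY j hiso)
  obtain ⟨D, hD₀, hD⟩ := exists_YNorm_indicator_le_of_card_lt bX hsemi hLRP hURP hMN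
  refine ⟨bY, h_vec, BY.kappa ^ 2 * D, fun A hA y _ =>
    bY.q_proj_le_of_dense h_vec h_coord hdense hD₀ (fun f => ?_) y⟩
  rw [hiso, hiso, Finsupp.filter_eq_indicator]
  exact hD A hA f f.hasFiniteSupport

end AGpaper
end
end

section
/- Let 𝒳 be a Schauder basis of a quasi-Banach space. Suppose there exist D∈(0,∞), b∈ℕ, and d∈ℕ such that ‖S_A‖ ≤ D for every finite A⊆ℕ with |A| > d and b|A| < min A. Then 𝒳 is asymptotically suppression unconditional, i.e., there is a constant D' such that ‖S_A‖ ≤ D' for every finite A⊆ℕ with |A| < min A. -/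
noncomputable section

open Classical
open scoped ENNReal NNReal

namespace AGpaper

/-! ### Biorthogonal systems and Schauder bases -/

variable {X : Type*} [AddCommGroup X] [Module ℝ X]

variable {mem : X → Prop} {nrm : X → ℝ}

/-!
Call a finite set `A` admissible if `d < |A|` and `b * |A| < min A`. Uniform boundedness of
coordinate projections passes to intersections, because `S_A ∘ S_E = S_{A ∩ E}`, and to disjoint
unions of boundedly many sets, by the quasi-triangle inequality. For large `n`, the singleton
`{n}` is the intersection of the admissible sets `{n, …, n + d}` and
`{n} ∪ {n + d + 1, …, n + 2d}`; for the remaining `n`, continuity of `x_n*` is enough. Hence the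
projections on singletons, and so on sets of any fixed cardinality, are uniformly bounded. Finally,
a set `A` with `|A| < min A` splits into `b + 1` pieces of cardinality at most `|A| / (b + 1) + 1`.
A piece `E` with `|E| > d + b` satisfies `b * |E| ≤ |A| < min A`, so it is admissible, and the
other pieces have bounded cardinality.
-/

variable {V : Submodule ℝ X} {κ : ℝ}

/-- `nrm` is a quasi-seminorm on the subspace `V`, with modulus of concavity `κ`; its values
outside `V` are arbitrary. -/
structure IsQuasiSeminormOn (V : Submodule ℝ X) (nrm : X → ℝ) (κ : ℝ) : Prop where
  one_le : 1 ≤ κ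
  nonneg : ∀ x ∈ V, 0 ≤ nrm x
  smul : ∀ (a : ℝ), ∀ x ∈ V, nrm (a • x) = |a| * nrm x
  add_le : ∀ x ∈ V, ∀ y ∈ V, nrm (x + y) ≤ κ * (nrm x + nrm y)

lemma QuasiBanach.isQuasiSeminormOn_top (B : QuasiBanach X) :
    IsQuasiSeminormOn ⊤ B.q B.kappa where
  one_le := B.one_le_kappa
  nonneg x _ := B.q_nonneg x
  smul a x _ := B.q_smul a x
  add_le x _ y _ := B.q_triangle x y

lemma IsQuasiSeminormOn.map_zero (hq : IsQuasiSeminormOn V nrm κ) : nrm 0 = 0 := by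
  simpa using hq.smul 0 0 V.zero_mem

/-- The finite sets on which the projections are assumed to be uniformly bounded: more than `d`
elements, all of them larger than `b` times the cardinality. -/
def admissibleSets (b d : ℕ) : Set (Finset ℕ) :=
  {A | d < A.card ∧ ∀ n ∈ A, b * A.card < n}

lemma singleton_mem_image2_inter_admissibleSets {b d n : ℕ} (hn : b * (d + 1) < n) :
    {n} ∈ Set.image2 (· ∩ ·) (admissibleSets b d) (admissibleSets b d) := by
  have mem_admissibleSets {A : Finset ℕ} (hcard : A.card = d + 1) (hmin : ∀ k ∈ A, n ≤ k) :
      A ∈ admissibleSets b d :=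
    ⟨by omega, fun k hk => hcard ▸ hn.trans_le (hmin k hk)⟩
  refine ⟨Finset.Icc n (n + d), mem_admissibleSets ?_ ?_,
    insert n (Finset.Icc (n + d + 1) (n + d + d)), mem_admissibleSets ?_ ?_, ?_⟩
  · rw [Nat.card_Icc]; omega
  · intro k hk; exact (Finset.mem_Icc.1 hk).1
  · rw [Finset.card_insert_of_notMem (by rw [Finset.mem_Icc]; omega), Nat.card_Icc]; omega
  · intro k hk; rw [Finset.mem_insert, Finset.mem_Icc] at hk; omega
  · ext k; simp only [Finset.mem_inter, Finset.mem_insert, Finset.mem_Icc,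
      Finset.mem_singleton]; omega

lemma mem_admissibleSets_of_subset_of_card_le {b d : ℕ} {A E : Finset ℕ}
    (hA : ∀ n ∈ A, A.card < n) (hEA : E ⊆ A) (hlarge : d + b < E.card)
    (hE : E.card ≤ A.card / (b + 1) + 1) : E ∈ admissibleSets b d := by
  have hcard : b * E.card ≤ A.card :=
    calc b * E.card ≤ b * (A.card / (b + 1) + 1) := Nat.mul_le_mul_left b hE
      _ = b * (A.card / (b + 1)) + b := by ring
      _ ≤ b * (A.card / (b + 1)) + A.card / (b + 1) := by omega
      _ = (b + 1) * (A.card / (b + 1)) := by ring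
      _ ≤ A.card := Nat.mul_div_le _ _
  exact ⟨by omega, fun n hn => hcard.trans_lt (hA n (hEA hn))⟩

namespace BioSystem

variable {𝒳 : BioSystem (· ∈ V) nrm}

lemma coord_sum_smul_vec (𝒳 : BioSystem (· ∈ V) nrm) (n : ℕ) (A : Finset ℕ) (c : ℕ → ℝ) :
    𝒳.coord n (∑ k ∈ A, c k • 𝒳.vec k) = if n ∈ A then c n else 0 := by
  induction A using Finset.induction_on with
  | empty => simpa using 𝒳.coord_smul n 0 0 V.zero_mem
  | insert a A ha ih =>
    rw [Finset.sum_insert ha, 𝒳.coord_add n _ _ (V.smul_mem _ (𝒳.vec_mem a))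
      (V.sum_mem fun k _ => V.smul_mem _ (𝒳.vec_mem k)), ih, 𝒳.coord_smul n _ _ (𝒳.vec_mem a),
      𝒳.biorth]
    by_cases hna : n = a
    · subst hna; simp [ha]
    · simp [hna]

lemma proj_mem (𝒳 : BioSystem (· ∈ V) nrm) (A : Finset ℕ) (f : X) : 𝒳.proj A f ∈ V :=
  V.sum_mem fun n _ => V.smul_mem _ (𝒳.vec_mem n)

lemma proj_proj (𝒳 : BioSystem (· ∈ V) nrm) (A E : Finset ℕ) (f : X) :
    𝒳.proj A (𝒳.proj E f) = 𝒳.proj (A ∩ E) f := by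
  simp only [proj, 𝒳.coord_sum_smul_vec, ite_smul, zero_smul, Finset.sum_ite_mem]

lemma proj_add_proj_sdiff (𝒳 : BioSystem mem nrm) {A E : Finset ℕ} (hEA : E ⊆ A) (f : X) :
    𝒳.proj E f + 𝒳.proj (A \ E) f = 𝒳.proj A f := by
  rw [add_comm]
  exact Finset.sum_sdiff hEA

/-- The coordinate projections `S_A`, `A ∈ 𝒜`, are uniformly bounded. -/
def ProjBddOn (𝒳 : BioSystem mem nrm) (𝒜 : Set (Finset ℕ)) : Prop :=
  ∃ C : ℝ, ∀ A ∈ 𝒜, ∀ f, mem f → nrm (𝒳.proj A f) ≤ C * nrm f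

namespace ProjBddOn

variable {𝒜 ℰ : Set (Finset ℕ)}

lemma mono {𝒳 : BioSystem mem nrm} (h : 𝒳.ProjBddOn ℰ) (hsub : 𝒜 ⊆ ℰ) : 𝒳.ProjBddOn 𝒜 :=
  h.imp fun _ hC A hA => hC A (hsub hA)

lemma exists_nonneg (hq : IsQuasiSeminormOn V nrm κ) (h : 𝒳.ProjBddOn 𝒜) :
    ∃ C : ℝ, 0 ≤ C ∧ ∀ A ∈ 𝒜, ∀ f ∈ V, nrm (𝒳.proj A f) ≤ C * nrm f := by
  obtain ⟨C, hC⟩ := h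
  exact ⟨max C 0, le_max_right _ _, fun A hA f hf => (hC A hA f hf).trans <|
    mul_le_mul_of_nonneg_right (le_max_left _ _) (hq.nonneg f hf)⟩

lemma union (hq : IsQuasiSeminormOn V nrm κ) (h𝒜 : 𝒳.ProjBddOn 𝒜) (hℰ : 𝒳.ProjBddOn ℰ) :
    𝒳.ProjBddOn (𝒜 ∪ ℰ) := by
  obtain ⟨C, hC⟩ := h𝒜
  obtain ⟨K, hK⟩ := hℰ
  refine ⟨max C K, ?_⟩
  rintro A (hA | hA) f hf
  · exact (hC A hA f hf).trans <|
      mul_le_mul_of_nonneg_right (le_max_left _ _) (hq.nonneg f hf)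
  · exact (hK A hA f hf).trans <|
      mul_le_mul_of_nonneg_right (le_max_right _ _) (hq.nonneg f hf)

lemma image2_inter (hq : IsQuasiSeminormOn V nrm κ) (h𝒜 : 𝒳.ProjBddOn 𝒜)
    (hℰ : 𝒳.ProjBddOn ℰ) : 𝒳.ProjBddOn (Set.image2 (· ∩ ·) 𝒜 ℰ) := by
  obtain ⟨C, hC0, hC⟩ := h𝒜.exists_nonneg hq
  obtain ⟨K, hK⟩ := hℰ
  refine ⟨C * K, ?_⟩
  rintro _ ⟨A, hA, E, hE, rfl⟩ f hf
  calc nrm (𝒳.proj (A ∩ E) f) = nrm (𝒳.proj A (𝒳.proj E f)) := by rw [proj_proj]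
    _ ≤ C * nrm (𝒳.proj E f) := hC A hA _ (𝒳.proj_mem E f)
    _ ≤ C * (K * nrm f) := mul_le_mul_of_nonneg_left (hK E hE f hf) hC0
    _ = C * K * nrm f := by ring

lemma of_subset_sdiff (hq : IsQuasiSeminormOn V nrm κ) (h𝒜 : 𝒳.ProjBddOn 𝒜)
    (hℰ : 𝒳.ProjBddOn ℰ) : 𝒳.ProjBddOn {A | ∃ E ⊆ A, E ∈ 𝒜 ∧ A \ E ∈ ℰ} := by
  obtain ⟨C, hC⟩ := h𝒜
  obtain ⟨K, hK⟩ := hℰ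
  refine ⟨κ * (C + K), ?_⟩
  rintro A ⟨E, hEA, hE, hAE⟩ f hf
  have hκ : 0 ≤ κ := zero_le_one.trans hq.one_le
  calc nrm (𝒳.proj A f) = nrm (𝒳.proj E f + 𝒳.proj (A \ E) f) := by
        rw [𝒳.proj_add_proj_sdiff hEA]
    _ ≤ κ * (nrm (𝒳.proj E f) + nrm (𝒳.proj (A \ E) f)) :=
        hq.add_le _ (𝒳.proj_mem E f) _ (𝒳.proj_mem (A \ E) f)
    _ ≤ κ * (C * nrm f + K * nrm f) :=
        mul_le_mul_of_nonneg_left (add_le_add (hC E hE f hf) (hK _ hAE f hf)) hκ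
    _ = κ * (C + K) * nrm f := by ring

end ProjBddOn

lemma projBddOn_singleton_empty (hq : IsQuasiSeminormOn V nrm κ) :
    𝒳.ProjBddOn {∅} := by
  refine ⟨0, ?_⟩
  rintro _ rfl f -
  simp [proj, hq.map_zero]

lemma projBddOn_singleton_singleton (hq : IsQuasiSeminormOn V nrm κ) (n : ℕ) :
    𝒳.ProjBddOn {{n}} := by
  obtain ⟨C, hC⟩ := 𝒳.coord_bdd n
  refine ⟨C * nrm (𝒳.vec n), ?_⟩
  rintro _ rfl f hf
  calc nrm (𝒳.proj {n} f) = |𝒳.coord n f| * nrm (𝒳.vec n) := by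
        rw [proj, Finset.sum_singleton, hq.smul _ _ (𝒳.vec_mem n)]
    _ ≤ C * nrm f * nrm (𝒳.vec n) :=
        mul_le_mul_of_nonneg_right (hC f hf) (hq.nonneg _ (𝒳.vec_mem n))
    _ = C * nrm (𝒳.vec n) * nrm f := by ring

lemma projBddOn_singleton (hq : IsQuasiSeminormOn V nrm κ) (A : Finset ℕ) :
    𝒳.ProjBddOn {A} := by
  induction A using Finset.induction_on with
  | empty => exact projBddOn_singleton_empty hq
  | insert n A hn ih =>
    refine ((projBddOn_singleton_singleton hq n).of_subset_sdiff hq ih).mono ?_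
    rintro _ rfl
    exact ⟨{n}, by simp, rfl, by simp [Finset.insert_sdiff_of_mem, hn]⟩

lemma projBddOn_of_finite (hq : IsQuasiSeminormOn V nrm κ) {𝒜 : Set (Finset ℕ)}
    (h𝒜 : 𝒜.Finite) : 𝒳.ProjBddOn 𝒜 := by
  induction 𝒜, h𝒜 using Set.Finite.induction_on with
  | empty => exact ⟨0, fun _ hA => hA.elim⟩
  | insert _ _ ih => exact (projBddOn_singleton hq _).union hq ih

lemma ProjBddOn.of_card_le_mul (hq : IsQuasiSeminormOn V nrm κ) {𝒢 : Set (Finset ℕ)}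
    (h𝒢 : 𝒳.ProjBddOn 𝒢) (k : ℕ) :
    𝒳.ProjBddOn {A | ∃ s, A.card ≤ k * s ∧ ∀ E ⊆ A, E.card ≤ s → E ∈ 𝒢} := by
  induction k with
  | zero =>
    refine (projBddOn_singleton_empty hq).mono ?_
    rintro A ⟨s, hcard, -⟩
    simpa using hcard
  | succ k ih =>
    refine (h𝒢.of_subset_sdiff hq ih).mono ?_
    rintro A ⟨s, hcard, hpieces⟩
    obtain ⟨E, hEA, hE⟩ := Finset.exists_subset_card_eq (min_le_right s A.card)
    have hrest : (A \ E).card ≤ k * s := by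
      rw [Finset.card_sdiff_of_subset hEA]
      rw [Nat.succ_mul] at hcard
      omega
    exact ⟨E, hEA, hpieces E hEA (hE.trans_le (min_le_left _ _)), s, hrest,
      fun F hF => hpieces F (hF.trans Finset.sdiff_subset)⟩

namespace ProjBddOn

variable {b d : ℕ}

lemma card_le_one_of_admissibleSets (hq : IsQuasiSeminormOn V nrm κ)
    (h : 𝒳.ProjBddOn (admissibleSets b d)) :
    𝒳.ProjBddOn {A | A.card ≤ 1} := by
  have hinitial : 𝒳.ProjBddOn (Finset.range (b * (d + 1) + 1)).powerset :=
    projBddOn_of_finite hq (Finset.finite_toSet _)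
  refine (hinitial.union hq (h.image2_inter hq h)).mono fun A hA => ?_
  obtain ⟨n, hAn⟩ := Finset.card_le_one_iff_subset_singleton.1 hA
  rcases Finset.subset_singleton_iff.1 hAn with rfl | rfl
  · exact .inl (Finset.empty_mem_powerset _)
  rcases le_or_gt n (b * (d + 1)) with hn | hn
  · refine .inl (Finset.mem_powerset.2 ?_)
    rwa [Finset.singleton_subset_iff, Finset.mem_range, Nat.lt_succ_iff]
  · exact .inr (singleton_mem_image2_inter_admissibleSets hn)

lemma card_le_of_card_le_one (hq : IsQuasiSeminormOn V nrm κ)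
    (h : 𝒳.ProjBddOn {A | A.card ≤ 1}) (M : ℕ) :
    𝒳.ProjBddOn {A | A.card ≤ M} :=
  (h.of_card_le_mul hq M).mono fun _ hA => ⟨1, by simpa using hA, fun _ _ hE => hE⟩

end ProjBddOn

end BioSystem

theorem statement9_general (hq : IsQuasiSeminormOn V nrm κ) (𝒳 : BioSystem (· ∈ V) nrm)
    {b d : ℕ} (h : 𝒳.ProjBddOn (admissibleSets b d)) : 𝒳.ASU := by
  have hsmall : 𝒳.ProjBddOn {E | E.card ≤ d + b} :=
    (h.card_le_one_of_admissibleSets hq).card_le_of_card_le_one hq (d + b)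
  refine ((hsmall.union hq h).of_card_le_mul hq (b + 1)).mono fun A hA =>
    ⟨A.card / (b + 1) + 1, (Nat.lt_mul_div_succ _ b.succ_pos).le, fun E hEA hE => ?_⟩
  rcases le_or_gt E.card (d + b) with hle | hlarge
  · exact .inl hle
  · exact .inr (mem_admissibleSets_of_subset_of_card_le hA hEA hlarge hE)

theorem statement9 {X : Type*} [AddCommGroup X] [Module ℝ X] (B : QuasiBanach X)
    (𝒳 : QBasis B) (D : ℝ) (hD : 0 < D) (b d : ℕ) (hb : 0 < b)
    (h : ∀ A : Finset ℕ, d < A.card → (∀ n ∈ A, b * A.card < n) →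
      ∀ f : X, B.q (𝒳.toBioSystem.proj A f) ≤ D * B.q f) :
    𝒳.toBioSystem.ASU :=
  statement9_general B.isQuasiSeminormOn_top 𝒳.toBioSystem
    ⟨D, fun A hA f _ => h A hA.1 hA.2 f⟩

end AGpaper
end
end
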